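/- arXiv:1912.07629 — 5 statements merged into one kernel-verified Lean document; each statement's English description precedes it below -/
import Mathlib

section
/- There exist absolute constants c₀ ∈ (0,1], c₁ ≥ 1 and k₀ ∈ ℕ such that for all k ≥ k₀ the following holds. Let d ≥ k, let w₁,…,w_k ∈ ℝ^d and a_t ∈ ℝ^d with w_i ≠ a_t for all i, set σ_t² := min_{i∈[k]} ‖w_i − a_t‖₂², and let i* be an index attaining this minimum. Let U ∈ ℝ^{d×k} have orthonormal columns and satisfy 1/2 ≤ ‖Uᵀ(w_i − a_t)‖₂ / ‖w_i − a_t‖₂ ≤ 1 for every i ∈ [k]. Let δ satisfy e^{−c₀√k} ≤ δ < 1, set M := ⌈e^{c₁√k}·ln(2/δ)⌉, let g₁,…,g_M be i.i.d. standard Gaussian vectors in ℝ^k, and set v_j := U g_j / ‖U g_j‖₂ for j ∈ [M]. Let σ* be a number with 0.9·σ_t ≤ σ* ≤ 1.1·σ_t, and set η := (1/2)·k^{−1/4}·σ*. Then with probability at least 1 − δ: (1) there exists at least one j ∈ [M] with ‖w_{i*} − a_t − η·v_j‖₂² ≤ (1 − 1/(5√k))·σ_t²; and (2) for all j ∈ [M]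 and all i ∈ [k], ‖w_i − a_t − η·v_j‖₂² ≥ (1 − 9/√k)·σ_t². -/
open MeasureTheory ProbabilityTheory

/-- The Euclidean norm on `ℝ^n`. -/
noncomputable def e2norm {n : ℕ} (v : Fin n → ℝ) : ℝ := Real.sqrt (∑ i, v i ^ 2)

/-- The standard Gaussian measure `N(0, I_n)` on `ℝ^n`. -/
noncomputable def stdGaussian (n : ℕ) : Measure (Fin n → ℝ) :=
  Measure.pi fun _ => gaussianReal 0 1

instance stdG_prob (n : ℕ) : IsProbabilityMeasure (_root_.stdGaussian n) := by
  unfold _root_.stdGaussian; infer_instance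

lemma map_lin (k : ℕ) (y : Fin k → ℝ) (hy : ∑ i, y i ^ 2 = 1) :
    (_root_.stdGaussian k).map (fun g => ∑ i, y i * g i) = gaussianReal 0 1 := by
  apply Measure.ext_of_charFun
  ext t
  rw [charFun_apply_real, integral_map (Measurable.aemeasurable (by fun_prop))
    (Measurable.aestronglyMeasurable (by fun_prop)), charFun_gaussianReal]
  have h : ∀ x : Fin k → ℝ, Complex.exp ((t : ℂ) * ((∑ i, y i * x i : ℝ) : ℂ) * Complex.I)
      = ∏ i, Complex.exp (((t * y i : ℝ) : ℂ) * (x i : ℂ) * Complex.I) := by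
    intro x
    rw [← Complex.exp_sum]
    congr 1
    push_cast
    rw [Finset.mul_sum, Finset.sum_mul]
    exact Finset.sum_congr rfl fun i _ => by ring
  simp_rw [h, _root_.stdGaussian]
  rw [integral_fintype_prod_eq_prod
    (f := fun i (x : ℝ) => Complex.exp (((t * y i : ℝ) : ℂ) * (x : ℂ) * Complex.I))]
  simp_rw [← charFun_apply_real, charFun_gaussianReal]
  rw [← Complex.exp_sum]
  congr 1
  have h2 : (∑ i, (y i : ℂ) ^ 2) = 1 := by exact_mod_cast hy
  simp only [Complex.ofReal_zero, mul_zero, zero_mul, NNReal.coe_one, Complex.ofReal_one, one_mul,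
    zero_sub, Finset.sum_neg_distrib, ← Finset.sum_div, Complex.ofReal_mul, mul_pow,
    ← Finset.mul_sum, h2, mul_one]

lemma gauss_upper (s : ℝ) (hs : 0 ≤ s) :
    (gaussianReal 0 1).real {x | s ≤ x} ≤ Real.exp (-s ^ 2 / 2) := by
  have h := measure_ge_le_exp_mul_mgf (μ := gaussianReal 0 1) (X := id) (t := s) s hs
    (by simpa using integrable_exp_mul_gaussianReal (μ := 0) (v := 1) s)
  rw [mgf_id_gaussianReal, ← Real.exp_add] at h
  refine h.trans (le_of_eq ?_)
  congr 1
  simp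
  ring

lemma gauss_lower (s : ℝ) (hs : 0 ≤ s) :
    Real.exp (-(s + 1) ^ 2 / 2) / 3 ≤ (gaussianReal 0 1).real {x | s ≤ x} := by
  have h0 : (gaussianReal 0 1).real (Set.Icc s (s + 1)) ≤ (gaussianReal 0 1).real {x | s ≤ x} :=
    measureReal_mono (fun x hx => hx.1)
  refine le_trans ?_ h0
  rw [measureReal_def, gaussianReal_apply_eq_integral _ one_ne_zero, ENNReal.toReal_ofReal
    (integral_nonneg fun x => gaussianPDFReal_nonneg _ _ _)]
  have h1 : ∫ x in Set.Icc s (s + 1), Real.exp (-(s + 1) ^ 2 / 2) / 3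
      ≤ ∫ x in Set.Icc s (s + 1), gaussianPDFReal 0 1 x := by
    apply setIntegral_mono_on
    · exact integrableOn_const (by simp)
    · exact (integrable_gaussianPDFReal 0 1).integrableOn
    · exact measurableSet_Icc
    · intro x hx
      rw [gaussianPDFReal]
      have hpi : √(2 * Real.pi * ((1 : NNReal) : ℝ)) ≤ 3 := by
        rw [Real.sqrt_le_left (by norm_num)]
        have := Real.pi_lt_d2
        norm_num
        linarith
      have hpos : 0 < √(2 * Real.pi * ((1 : NNReal) : ℝ)) := by
        apply Real.sqrt_pos.2; simp; positivity
      rw [div_eq_inv_mul]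
      apply mul_le_mul
      · exact inv_anti₀ hpos hpi
      · apply Real.exp_le_exp.2
        simp only [NNReal.coe_one, sub_zero, mul_one]
        have : x ^ 2 ≤ (s + 1) ^ 2 := pow_le_pow_left₀ (hs.trans hx.1) hx.2 2
        linarith
      · positivity
      · positivity
  refine le_trans (le_of_eq ?_) h1
  simp

lemma gauss_sq_mgf (l : ℝ) (hl : l < 1 / 2) :
    ∫ x, Real.exp (l * x ^ 2) ∂(gaussianReal 0 1) = (√(1 - 2 * l))⁻¹ := by
  rw [integral_gaussianReal_eq_integral_smul one_ne_zero]
  have h : ∀ x : ℝ, gaussianPDFReal 0 1 x • Real.exp (l * x ^ 2)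
      = (√(2 * Real.pi))⁻¹ * Real.exp (-(1 / 2 - l) * x ^ 2) := by
    intro x
    rw [gaussianPDFReal, smul_eq_mul, mul_assoc, ← Real.exp_add]
    simp only [NNReal.coe_one, sub_zero, mul_one]
    congr 2
    ring
  simp_rw [h]
  rw [integral_const_mul, integral_gaussian]
  have e : Real.pi / (1 / 2 - l) = (2 * Real.pi) * (1 - 2 * l)⁻¹ := by
    have : 1 / 2 - l ≠ 0 := by linarith
    have : 1 - 2 * l ≠ 0 := by linarith
    field_simp
  have hp := Real.pi_pos
  rw [e, Real.sqrt_mul (x := 2 * Real.pi) (by positivity), ← mul_assoc, inv_mul_cancel₀ (by positivity), one_mul,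
    Real.sqrt_inv]

lemma sq_mgf (k : ℕ) (l : ℝ) (hl : l < 1 / 2) :
    Integrable (fun g : Fin k → ℝ => Real.exp (l * ∑ i, g i ^ 2)) (_root_.stdGaussian k) ∧
    mgf (fun g : Fin k → ℝ => ∑ i, g i ^ 2) (_root_.stdGaussian k) l = ((√(1 - 2 * l))⁻¹) ^ k := by
  have h : mgf (fun g : Fin k → ℝ => ∑ i, g i ^ 2) (_root_.stdGaussian k) l
      = ((√(1 - 2 * l))⁻¹) ^ k := by
    rw [mgf, _root_.stdGaussian]
    simp_rw [Finset.mul_sum, Real.exp_sum]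
    rw [integral_fintype_prod_eq_prod (f := fun _ (x : ℝ) => Real.exp (l * x ^ 2))]
    simp [gauss_sq_mgf l hl]
  refine ⟨?_, h⟩
  apply Integrable.of_integral_ne_zero
  rw [mgf] at h
  rw [h]
  have : 0 < 1 - 2 * l := by linarith
  positivity

lemma norm_upper (k : ℕ) :
    (_root_.stdGaussian k).real {g | 4 * (k : ℝ) ≤ ∑ i, g i ^ 2} ≤ Real.exp (-(k : ℝ) / 2) := by
  obtain ⟨h1, h2⟩ := sq_mgf k (1 / 4) (by norm_num)
  have h := measure_ge_le_exp_mul_mgf (4 * (k : ℝ)) (by norm_num) h1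
  rw [h2] at h
  refine h.trans ?_
  have e : (√(1 - 2 * (1 / 4 : ℝ)))⁻¹ ≤ Real.exp (1 / 2) := by
    rw [← Real.sqrt_inv]
    apply Real.sqrt_le_iff.2
    refine ⟨(Real.exp_pos _).le, ?_⟩
    rw [← Real.exp_nat_mul]
    have := Real.exp_one_gt_d9
    norm_num
    linarith
  have e2 : ((√(1 - 2 * (1 / 4 : ℝ)))⁻¹) ^ k ≤ Real.exp (k * (1 / 2)) := by
    rw [Real.exp_nat_mul]
    exact pow_le_pow_left₀ (by positivity) e k
  calc _ ≤ Real.exp (-(1 / 4) * (4 * (k : ℝ))) * Real.exp (k * (1 / 2)) := by gcongr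
    _ = _ := by rw [← Real.exp_add]; congr 1; ring

lemma norm_lower (k : ℕ) :
    (_root_.stdGaussian k).real {g | ∑ i, g i ^ 2 ≤ (k : ℝ) / 4} ≤ Real.exp (-(k : ℝ) / 8) := by
  obtain ⟨h1, h2⟩ := sq_mgf k (-(3 / 2)) (by norm_num)
  have h := measure_le_le_exp_mul_mgf ((k : ℝ) / 4) (by norm_num) h1
  rw [h2] at h
  refine h.trans ?_
  have e : (√(1 - 2 * (-(3 / 2) : ℝ)))⁻¹ ≤ Real.exp (-(1 / 2)) := by
    rw [← Real.sqrt_inv]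
    apply Real.sqrt_le_iff.2
    refine ⟨(Real.exp_pos _).le, ?_⟩
    rw [← Real.exp_nat_mul]
    have := Real.exp_one_lt_d9
    have e3 : ((2 : ℕ) : ℝ) * -(1 / 2) = -1 := by norm_num
    rw [e3, Real.exp_neg]
    apply inv_anti₀ (Real.exp_pos _)
    linarith
  have e2 : ((√(1 - 2 * (-(3 / 2) : ℝ)))⁻¹) ^ k ≤ Real.exp (k * (-(1 / 2))) := by
    rw [Real.exp_nat_mul]
    exact pow_le_pow_left₀ (by positivity) e k
  calc _ ≤ Real.exp (-(-(3 / 2)) * ((k : ℝ) / 4)) * Real.exp (k * (-(1 / 2))) := by gcongr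
    _ = _ := by rw [← Real.exp_add]; congr 1; ring

lemma lin_real (k : ℕ) (y : Fin k → ℝ) (hy : 0 < e2norm y) (s : ℝ) :
    (_root_.stdGaussian k).real {g | e2norm y * s ≤ ∑ i, y i * g i}
      = (gaussianReal 0 1).real {x | s ≤ x} := by
  have hsq : e2norm y ^ 2 = ∑ i, y i ^ 2 :=
    Real.sq_sqrt (Finset.sum_nonneg fun i _ => sq_nonneg _)
  have h1 : ∑ i, (y i / e2norm y) ^ 2 = 1 := by
    simp_rw [div_pow]
    rw [← Finset.sum_div, ← hsq, div_self (by positivity)]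
  change _ = (gaussianReal 0 1).real (Set.Ici s)
  rw [← map_lin k _ h1, map_measureReal_apply (by fun_prop) measurableSet_Ici]
  congr 1
  ext g
  simp only [Set.mem_ofPred_eq, Set.mem_preimage, Set.mem_Ici]
  have h2 : ∑ i, y i / e2norm y * g i = (∑ i, y i * g i) / e2norm y := by
    rw [Finset.sum_div]
    exact Finset.sum_congr rfl fun i _ => by ring
  rw [h2, le_div_iff₀ hy, mul_comm]

lemma good_dir (k : ℕ) (q : ℝ) (hq : 10 ≤ q) (hqk : q ^ 4 = k) (y : Fin k → ℝ)
    (hy : 0 < e2norm y) :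
    Real.exp (-(4 * q ^ 2)) ≤ (_root_.stdGaussian k).real
      {g | e2norm y * (2 * q) ≤ ∑ i, y i * g i ∧ ∑ i, g i ^ 2 ≤ 4 * (k : ℝ)} := by
  have h1 := gauss_lower (2 * q) (by linarith)
  rw [← lin_real k y hy] at h1
  have h2 : (_root_.stdGaussian k).real {g | e2norm y * (2 * q) ≤ ∑ i, y i * g i}
      ≤ (_root_.stdGaussian k).real
        {g | e2norm y * (2 * q) ≤ ∑ i, y i * g i ∧ ∑ i, g i ^ 2 ≤ 4 * (k : ℝ)}
        + (_root_.stdGaussian k).real {g | 4 * (k : ℝ) ≤ ∑ i, g i ^ 2} := by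
    refine le_trans (measureReal_mono ?_) (measureReal_union_le _ _)
    intro g hg
    rcases le_total (∑ i, g i ^ 2) (4 * (k : ℝ)) with h | h
    · exact Or.inl ⟨hg, h⟩
    · exact Or.inr h
  have h3 := norm_upper k
  rw [← hqk] at h3
  have h4 : Real.exp (-q ^ 4 / 2) ≤ Real.exp (-(4 * q ^ 2)) := by
    apply Real.exp_le_exp.2
    have : 100 * q ^ 2 ≤ q ^ 2 * q ^ 2 := by
      have : 100 ≤ q ^ 2 := by nlinarith
      gcongr
    nlinarith
  have h5 : Real.exp (-(3 * q ^ 2)) ≤ Real.exp (-(2 * q + 1) ^ 2 / 2) := by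
    apply Real.exp_le_exp.2
    nlinarith
  have h6 : 6 * Real.exp (-(4 * q ^ 2)) ≤ Real.exp (-(3 * q ^ 2)) := by
    have e : Real.exp (-(3 * q ^ 2)) = Real.exp (q ^ 2) * Real.exp (-(4 * q ^ 2)) := by
      rw [← Real.exp_add]; congr 1; ring
    rw [e]
    have := Real.add_one_le_exp (q ^ 2)
    gcongr
    nlinarith
  rw [← hqk] at h2 ⊢
  linarith

lemma bad_dir (k : ℕ) (q : ℝ) (hq : 10 ≤ q) (y : Fin k → ℝ)
    (hy : 0 < e2norm y) :
    (_root_.stdGaussian k).real {g | e2norm y * (4 * q) ≤ ∑ i, y i * g i}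
      ≤ Real.exp (-(8 * q ^ 2)) := by
  rw [lin_real k y hy]
  refine (gauss_upper _ (by linarith)).trans (le_of_eq ?_)
  congr 1; ring

lemma e2norm_sq {n : ℕ} (v : Fin n → ℝ) : e2norm v ^ 2 = ∑ i, v i ^ 2 :=
  Real.sq_sqrt (Finset.sum_nonneg fun i _ => sq_nonneg _)

lemma e2norm_nonneg {n : ℕ} (v : Fin n → ℝ) : 0 ≤ e2norm v := Real.sqrt_nonneg _

lemma e2norm_sq' {n : ℕ} (v : Fin n → ℝ) : e2norm v ^ 2 = v ⬝ᵥ v := by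
  rw [e2norm_sq]
  exact Finset.sum_congr rfl fun i _ => by ring

lemma e2norm_U {k d : ℕ} (U : Matrix (Fin d) (Fin k) ℝ) (hU : U.transpose * U = 1)
    (g : Fin k → ℝ) : e2norm (U.mulVec g) = e2norm g := by
  have h : e2norm (U.mulVec g) ^ 2 = e2norm g ^ 2 := by
    rw [e2norm_sq', e2norm_sq', Matrix.dotProduct_mulVec, ← Matrix.mulVec_transpose,
      Matrix.mulVec_mulVec, hU, Matrix.one_mulVec]
  exact (pow_left_inj₀ (e2norm_nonneg _) (e2norm_nonneg _) two_ne_zero).1 h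

lemma expand {k d : ℕ} (U : Matrix (Fin d) (Fin k) ℝ) (hU : U.transpose * U = 1)
    (g : Fin k → ℝ) (x : Fin d → ℝ) (η : ℝ) (hg : 0 < e2norm g) :
    e2norm (x - η • (e2norm (U.mulVec g))⁻¹ • U.mulVec g) ^ 2
      = e2norm x ^ 2 - 2 * η * ((∑ i, U.transpose.mulVec x i * g i) / e2norm g) + η ^ 2 := by
  have h1 : U.mulVec g ⬝ᵥ U.mulVec g = e2norm g ^ 2 := by
    rw [← e2norm_sq', e2norm_U U hU]
  have h2 : x ⬝ᵥ U.mulVec g = ∑ i, U.transpose.mulVec x i * g i := by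
    rw [Matrix.dotProduct_mulVec, ← Matrix.mulVec_transpose]
    rfl
  rw [e2norm_U U hU, e2norm_sq', e2norm_sq', ← h2]
  simp only [sub_dotProduct, dotProduct_sub, smul_dotProduct, dotProduct_smul, smul_eq_mul, h1,
    dotProduct_comm (U.mulVec g) x]
  field_simp
  ring

lemma det_good (σ q s N p n : ℝ) (hσ : 0 < σ) (hq : 10 ≤ q) (hs1 : 0.9 * σ ≤ s)
    (hs2 : s ≤ 1.1 * σ) (hN : σ / 2 ≤ N) (hp : N * (2 * q) ≤ p) (hn : 0 < n)
    (hn2 : n ≤ 2 * q ^ 2) :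
    σ ^ 2 - 2 * (1 / 2 * q⁻¹ * s) * (p / n) + (1 / 2 * q⁻¹ * s) ^ 2
      ≤ (1 - 1 / (5 * q ^ 2)) * σ ^ 2 := by
  have hq0 : 0 < q := by linarith
  norm_num at hs1 hs2
  have hs0 : 0 < s := by linarith
  have h1 : σ / (2 * q) ≤ p / n := by
    rw [div_le_div_iff₀ (by positivity) hn]
    calc σ * n ≤ σ * (2 * q ^ 2) := by gcongr
      _ = (σ / 2 * (2 * q)) * (2 * q) := by ring
      _ ≤ (N * (2 * q)) * (2 * q) := by gcongr
      _ ≤ _ := by gcongr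
  have h2 : q⁻¹ * s * (σ / (2 * q)) ≤ q⁻¹ * s * (p / n) := by gcongr
  have h3 : σ ^ 2 / 5 + s ^ 2 / 4 ≤ s * σ / 2 := by nlinarith
  have h4 : (σ ^ 2 / 5 + s ^ 2 / 4) / q ^ 2 ≤ (s * σ / 2) / q ^ 2 := by gcongr
  have e1 : q⁻¹ * s * (σ / (2 * q)) = (s * σ / 2) / q ^ 2 := by field_simp
  have e2 : (σ ^ 2 / 5 + s ^ 2 / 4) / q ^ 2 = 1 / (5 * q ^ 2) * σ ^ 2 + (1 / 2 * q⁻¹ * s) ^ 2 := by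
    field_simp; ring
  linarith

lemma det_bad (σ q s N p n B : ℝ) (hσ : 0 < σ) (hq : 10 ≤ q) (hs1 : 0.9 * σ ≤ s)
    (hs2 : s ≤ 1.1 * σ) (hB : σ ≤ B) (hN : N ≤ B) (hp : p ≤ N * (4 * q))
    (hn2 : q ^ 2 / 2 ≤ n) :
    (1 - 9 / q ^ 2) * σ ^ 2 ≤
    B ^ 2 - 2 * (1 / 2 * q⁻¹ * s) * (p / n) + (1 / 2 * q⁻¹ * s) ^ 2 := by
  have hq0 : 0 < q := by linarith
  norm_num at hs1 hs2
  have hs0 : 0 < s := by linarith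
  have hB0 : 0 < B := by linarith
  have hn : 0 < n := lt_of_lt_of_le (by positivity) hn2
  have h1 : p / n ≤ 8 * B / q := by
    rw [div_le_div_iff₀ hn hq0]
    calc p * q ≤ N * (4 * q) * q := by gcongr
      _ ≤ B * (4 * q) * q := by gcongr
      _ = 8 * B * (q ^ 2 / 2) := by ring
      _ ≤ _ := by gcongr
  have h2 : q⁻¹ * s * (p / n) ≤ q⁻¹ * s * (8 * B / q) := by gcongr
  have h3 : q⁻¹ * s * (8 * B / q) = s * (8 * B) * (1 / q ^ 2) := by field_simp
  have h4 : s * (8 * B) * (1 / q ^ 2) ≤ 9 * σ * B * (1 / q ^ 2) := by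
    apply mul_le_mul_of_nonneg_right _ (by positivity)
    nlinarith
  have h5 : 1 / q ^ 2 ≤ 1 / 9 := by
    apply one_div_le_one_div_of_le (by norm_num)
    nlinarith
  have h7 : 0 ≤ (B - σ) * (B + σ - 9 * σ * (1 / q ^ 2)) := by
    apply mul_nonneg (by linarith)
    nlinarith
  have e : 9 / q ^ 2 = 9 * (1 / q ^ 2) := by ring
  rw [e]
  have := sq_nonneg (1 / 2 * q⁻¹ * s)
  nlinarith

lemma prob_combine {X : Type*} [MeasurableSpace X] (μ : Measure X) [IsProbabilityMeasure μ]
    (M : ℕ) (A Bad : Set X) (hA : MeasurableSet A) (hBad : MeasurableSet Bad) (p b : ℝ)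
    (hp : p ≤ μ.real A) (hb : μ.real Bad ≤ b) :
    1 - ((1 - p) ^ M + M * b) ≤
      (Measure.pi fun _ : Fin M => μ).real {g | (∃ j, g j ∈ A) ∧ ∀ j, g j ∉ Bad} := by
  set P := Measure.pi fun _ : Fin M => μ with hP
  set E1 : Set (Fin M → X) := Set.pi Set.univ fun _ => Aᶜ with hE1
  set E2 : Set (Fin M → X) := ⋃ j, Function.eval j ⁻¹' Bad with hE2
  have hm1 : MeasurableSet E1 := MeasurableSet.univ_pi fun _ => hA.compl
  have hm2 : MeasurableSet E2 :=
    MeasurableSet.iUnion fun j => measurable_pi_apply j hBad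
  have h1 : P.real E1 ≤ (1 - p) ^ M := by
    rw [measureReal_def, hP, hE1, Measure.pi_pi]
    simp only [Finset.prod_const, Finset.card_univ, Fintype.card_fin, ENNReal.toReal_pow]
    rw [← measureReal_def, probReal_compl_eq_one_sub hA]
    have : μ.real A ≤ 1 := measureReal_le_one
    exact pow_le_pow_left₀ (by linarith) (by linarith) M
  have h2 : P.real E2 ≤ M * b := by
    refine (measureReal_iUnion_fintype_le _).trans ?_
    have : ∀ j : Fin M, P.real (Function.eval j ⁻¹' Bad) ≤ b := by
      intro j
      have := (measurePreserving_eval (fun _ : Fin M => μ) j).measureReal_preimage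
        hBad.nullMeasurableSet
      rw [this]; exact hb
    refine (Finset.sum_le_sum fun j _ => this j).trans ?_
    simp
  have h3 : P.real (E1 ∪ E2)ᶜ ≤ P.real {g | (∃ j, g j ∈ A) ∧ ∀ j, g j ∉ Bad} := by
    refine measureReal_mono ?_
    intro g hg
    simp only [hE1, hE2, Set.mem_compl_iff, Set.mem_union, not_or, Set.mem_pi, Set.mem_univ,
      forall_const, not_forall, not_not, Set.mem_iUnion, Set.mem_preimage, Function.eval,
      not_exists] at hg
    obtain ⟨⟨j, hj⟩, h⟩ := hg
    exact ⟨⟨j, by simpa using hj⟩, h⟩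
  rw [probReal_compl_eq_one_sub (hm1.union hm2)] at h3
  have h4 := measureReal_union_le (μ := P) E1 E2
  linarith

lemma numeric (r δ L p : ℝ) (M : ℕ) (hr : 100 ≤ r) (hδ : Real.exp (-r) ≤ δ) (hδ1 : δ < 1)
    (hL : L = Real.log (2 / δ))
    (hM : M = ⌈Real.exp (4 * r) * L⌉₊) (hp : p = Real.exp (-(4 * r))) :
    (1 - p) ^ M + M * ((r ^ 2 + 1) * Real.exp (-(8 * r))) ≤ δ := by
  have hδ0 : 0 < δ := (Real.exp_pos _).trans_le hδ
  have hL0 : 0 ≤ L := by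
    rw [hL]; apply Real.log_nonneg
    rw [le_div_iff₀ hδ0]; linarith
  have hM1 : Real.exp (4 * r) * L ≤ M := by rw [hM]; exact Nat.le_ceil _
  have hM2 : (M : ℝ) ≤ Real.exp (4 * r) * L + 1 := by
    rw [hM]; exact (Nat.ceil_lt_add_one (by positivity)).le
  have a1 : (1 - p) ^ M ≤ δ / 2 := by
    have hp1 : p ≤ 1 := by rw [hp]; apply Real.exp_le_one_iff.2; linarith
    calc (1 - p) ^ M ≤ (Real.exp (-p)) ^ M :=
          pow_le_pow_left₀ (by linarith) (Real.one_sub_le_exp_neg p) M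
      _ = Real.exp (-(p * M)) := by rw [← Real.exp_nat_mul]; congr 1; ring
      _ ≤ Real.exp (-L) := by
          apply Real.exp_le_exp.2
          have : p * (Real.exp (4 * r) * L) ≤ p * M := by rw [hp]; gcongr
          have e : p * (Real.exp (4 * r) * L) = L := by
            rw [hp, ← mul_assoc, ← Real.exp_add]; simp
          linarith
      _ = δ / 2 := by
          rw [hL, Real.exp_neg, Real.exp_log (by positivity), inv_div]
  have hLb : L ≤ 2 * Real.exp r := by
    have h1 : L ≤ 2 / δ := by
      rw [hL]
      exact Real.log_le_self (by positivity)
    have h2 : 2 / δ ≤ 2 / Real.exp (-r) := by gcongr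
    have h3 : 2 / Real.exp (-r) = 2 * Real.exp r := by rw [Real.exp_neg]; simp
    linarith
  have hMb : (M : ℝ) ≤ 3 * Real.exp (5 * r) := by
    have h1 : Real.exp (4 * r) * L ≤ Real.exp (4 * r) * (2 * Real.exp r) := by gcongr
    have h2 : Real.exp (4 * r) * (2 * Real.exp r) = 2 * Real.exp (5 * r) := by
      have : Real.exp (5 * r) = Real.exp (4 * r) * Real.exp r := by
        rw [← Real.exp_add]; congr 1; ring
      rw [this]; ring
    have h3 : 1 ≤ Real.exp (5 * r) := Real.one_le_exp (by linarith)
    linarith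
  have hq := Real.quadratic_le_exp_of_nonneg (x := r) (by linarith)
  have a2 : (M : ℝ) * ((r ^ 2 + 1) * Real.exp (-(8 * r))) ≤ δ / 2 := by
    have e1 : 6 * (r ^ 2 + 1) ≤ Real.exp (2 * r) := by
      have : Real.exp (2 * r) = Real.exp r * Real.exp r := by
        rw [← Real.exp_add]; congr 1; ring
      rw [this]
      have h12 : 12 ≤ Real.exp r := by nlinarith
      nlinarith
    calc (M : ℝ) * ((r ^ 2 + 1) * Real.exp (-(8 * r)))
        ≤ (3 * Real.exp (5 * r)) * ((r ^ 2 + 1) * Real.exp (-(8 * r))) := by gcongr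
      _ = (6 * (r ^ 2 + 1)) * (Real.exp (5 * r) * Real.exp (-(8 * r))) / 2 := by ring
      _ ≤ Real.exp (2 * r) * (Real.exp (5 * r) * Real.exp (-(8 * r))) / 2 := by gcongr
      _ = Real.exp (-r) / 2 := by
          rw [← Real.exp_add, ← Real.exp_add]; congr 2; ring
      _ ≤ δ / 2 := by gcongr
  linarith

/-- Progress of moment descent per step: with `M = ⌈e^{c₁√k}·ln(2/δ)⌉` i.i.d. standard
Gaussian directions `g_j` in `ℝ^k` and `v_j = U g_j / ‖U g_j‖`, with probability at least
`1 − δ`: (1) some `j` contracts the distance to the closest regressor `w_{i*}` by a factor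
`1 − 1/(5√k)`, and (2) no step contracts any `‖w_i − a_t − η v_j‖²` below `(1 − 9/√k)·σ_t²`. -/
theorem stmt6 :
    ∃ (c₀ c₁ : ℝ) (k₀ : ℕ), 0 < c₀ ∧ c₀ ≤ 1 ∧ 1 ≤ c₁ ∧ 1 ≤ k₀ ∧
      ∀ (k d : ℕ), k₀ ≤ k → k ≤ d →
      ∀ (w : Fin k → Fin d → ℝ) (a : Fin d → ℝ), (∀ i, w i ≠ a) →
      ∀ (σt : ℝ) (istar : Fin k),
        IsLeast (Set.range fun i => e2norm (w i - a)) σt →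
        e2norm (w istar - a) = σt →
      ∀ U : Matrix (Fin d) (Fin k) ℝ, U.transpose * U = 1 →
        (∀ i, 1 / 2 ≤ e2norm (U.transpose.mulVec (w i - a)) / e2norm (w i - a)) →
        (∀ i, e2norm (U.transpose.mulVec (w i - a)) / e2norm (w i - a) ≤ 1) →
      ∀ δ : ℝ, Real.exp (-c₀ * Real.sqrt k) ≤ δ → δ < 1 →
      ∀ M : ℕ, M = ⌈Real.exp (c₁ * Real.sqrt k) * Real.log (2 / δ)⌉₊ →
      ∀ σstar : ℝ, 0.9 * σt ≤ σstar → σstar ≤ 1.1 * σt →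
      ∀ η : ℝ, η = 1 / 2 * (k : ℝ) ^ (-(1 : ℝ) / 4) * σstar →
        ENNReal.ofReal (1 - δ) ≤
          (Measure.pi fun _ : Fin M => stdGaussian k)
            {g : Fin M → Fin k → ℝ |
              (∃ j, e2norm (w istar - a - η • (e2norm (U.mulVec (g j)))⁻¹ • U.mulVec (g j)) ^ 2
                  ≤ (1 - 1 / (5 * Real.sqrt k)) * σt ^ 2) ∧
              ∀ j, ∀ i, (1 - 9 / Real.sqrt k) * σt ^ 2
                  ≤ e2norm (w i - a - η • (e2norm (U.mulVec (g j)))⁻¹ • U.mulVec (g j)) ^ 2} := by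
  refine ⟨1, 4, 10000, by norm_num, le_rfl, by norm_num, by norm_num, ?_⟩
  intro k d hk hkd w a hwa σt istar hleast histar U hU hU1 hU2 δ hδ hδ1 M hM σstar hs1 hs2 η hη
  have hk' : (10000 : ℝ) ≤ k := by exact_mod_cast hk
  -- the fourth root of `k`
  set q : ℝ := √(√(k : ℝ)) with hqdef
  have hr : √(k : ℝ) = q ^ 2 := (Real.sq_sqrt (Real.sqrt_nonneg _)).symm
  have hr100 : 100 ≤ q ^ 2 := by
    rw [← hr]; apply Real.le_sqrt_of_sq_le; norm_num; exact hk
  have hq0 : 0 ≤ q := Real.sqrt_nonneg _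
  have hq : 10 ≤ q := by nlinarith
  have hqk : q ^ 4 = k := by
    have : (q ^ 2) ^ 2 = k := by rw [← hr]; exact Real.sq_sqrt (by positivity)
    rw [← this]; ring
  have hηq : η = 1 / 2 * q⁻¹ * σstar := by
    rw [hη, ← hqk]
    congr 2
    rw [← Real.rpow_natCast, ← Real.rpow_mul hq0]
    norm_num
    exact Real.rpow_neg_one q
  have hxpos : ∀ i, 0 < e2norm (w i - a) := by
    intro i
    rcases (e2norm_nonneg (w i - a)).lt_or_eq with h | h
    · exact h
    · exfalso
      apply hwa i
      have h2 := e2norm_sq (w i - a)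
      rw [← h] at h2
      have h3 := (Finset.sum_eq_zero_iff_of_nonneg (fun i _ => sq_nonneg _)).1
        (by rw [← h2]; norm_num : ∑ j, (w i - a) j ^ 2 = 0)
      ext j
      have h4 := h3 j (Finset.mem_univ _)
      have h5 : (w i - a) j = 0 := by simpa using h4
      simpa [sub_eq_zero] using h5
  have hσ : 0 < σt := histar ▸ hxpos istar
  have hmin : ∀ i, σt ≤ e2norm (w i - a) := fun i => hleast.2 ⟨i, rfl⟩
  set y : Fin k → Fin k → ℝ := fun i => U.transpose.mulVec (w i - a) with hy
  have hy1 : ∀ i, e2norm (w i - a) / 2 ≤ e2norm (y i) := by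
    intro i
    have := (le_div_iff₀ (hxpos i)).1 (hU1 i)
    simp only [hy]
    linarith
  have hy2 : ∀ i, e2norm (y i) ≤ e2norm (w i - a) := by
    intro i
    have := (div_le_iff₀ (hxpos i)).1 (hU2 i)
    simp only [hy]
    linarith
  have hypos : ∀ i, 0 < e2norm (y i) := fun i => by linarith [hy1 i, hxpos i]
  set C : Set (Fin k → ℝ) := {g | ∑ i, g i ^ 2 ≤ (k : ℝ) / 4} with hC
  set B : Fin k → Set (Fin k → ℝ) := fun i => {g | e2norm (y i) * (4 * q) ≤ ∑ l, y i l * g l}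
    with hB
  set A : Set (Fin k → ℝ) := {g | e2norm (y istar) * (2 * q) ≤ ∑ l, y istar l * g l ∧
    ∑ i, g i ^ 2 ≤ 4 * (k : ℝ)} with hA
  have hCm : MeasurableSet C := measurableSet_le (by fun_prop) (by fun_prop)
  have hBm : ∀ i, MeasurableSet (B i) := fun i => measurableSet_le (by fun_prop) (by fun_prop)
  have hAm : MeasurableSet A := by
    have m1 : MeasurableSet {g : Fin k → ℝ | e2norm (y istar) * (2 * q) ≤ ∑ l, y istar l * g l} :=
      measurableSet_le (by fun_prop) (by fun_prop)
    have m2 : MeasurableSet {g : Fin k → ℝ | ∑ i, g i ^ 2 ≤ 4 * (k : ℝ)} :=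
      measurableSet_le (by fun_prop) (by fun_prop)
    exact m1.inter m2
  have hAp := good_dir k q hq hqk (y istar) (hypos istar)
  have hbad : (_root_.stdGaussian k).real ((⋃ i, B i) ∪ C)
      ≤ ((q ^ 2) ^ 2 + 1) * Real.exp (-(8 * q ^ 2)) := by
    have h1 : (_root_.stdGaussian k).real (⋃ i, B i) ≤ k * Real.exp (-(8 * q ^ 2)) := by
      refine (measureReal_iUnion_fintype_le _).trans ?_
      refine (Finset.sum_le_sum fun i _ => bad_dir k q hq (y i) (hypos i)).trans ?_
      simp
    have h2 : (_root_.stdGaussian k).real C ≤ Real.exp (-(8 * q ^ 2)) := by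
      refine (norm_lower k).trans ?_
      apply Real.exp_le_exp.2
      rw [← hqk]
      nlinarith
    have h3 := measureReal_union_le (μ := _root_.stdGaussian k) (⋃ i, B i) C
    have h4 : (q ^ 2) ^ 2 = (k : ℝ) := by rw [← hqk]; ring
    rw [h4]
    linarith
  have key := prob_combine (_root_.stdGaussian k) M A ((⋃ i, B i) ∪ C) hAm
    ((MeasurableSet.iUnion hBm).union hCm) _ _ hAp hbad
  have num := numeric (q ^ 2) δ _ _ M hr100 (by rw [← hr]; simpa using hδ) hδ1 rfl
    (by rw [hM, hr]) rfl
  have key2 : 1 - δ ≤ (Measure.pi fun _ : Fin M => _root_.stdGaussian k).real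
      {g | (∃ j, g j ∈ A) ∧ ∀ j, g j ∉ (⋃ i, B i) ∪ C} := by linarith
  refine (ENNReal.ofReal_le_ofReal key2).trans ?_
  rw [ofReal_measureReal]
  apply measure_mono
  rintro g ⟨⟨j0, hj0⟩, hnb⟩
  have hnorm : ∀ j, q ^ 2 / 2 ≤ e2norm (g j) := by
    intro j
    have h1 : g j ∉ C := fun h => hnb j (Or.inr h)
    simp only [hC, Set.mem_ofPred_eq, not_le, ← e2norm_sq] at h1
    apply le_of_sq_le_sq _ (e2norm_nonneg _)
    rw [← hqk] at h1
    nlinarith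
  have hnpos : ∀ j, 0 < e2norm (g j) := fun j => lt_of_lt_of_le (by positivity) (hnorm j)
  refine ⟨⟨j0, ?_⟩, ?_⟩
  · rw [expand U hU (g j0) _ η (hnpos j0), histar, hηq, hr]
    refine det_good σt q σstar (e2norm (y istar)) _ _ hσ hq hs1 hs2 ?_ hj0.1 (hnpos j0) ?_
    · have := hy1 istar; rw [histar] at this; exact this
    · have h := hj0.2
      rw [← e2norm_sq, ← hqk] at h
      apply le_of_sq_le_sq _ (by positivity)
      nlinarith
  · intro j i
    rw [expand U hU (g j) _ η (hnpos j), hηq, hr]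
    refine det_bad σt q σstar (e2norm (y i)) _ _ _ hσ hq hs1 hs2 (hmin i) (hy2 i) ?_ (hnorm j)
    have h1 : g j ∉ B i := fun h => hnb j (Or.inl (Set.mem_iUnion.2 ⟨i, h⟩))
    simp only [hB, Set.mem_ofPred_eq, not_le] at h1
    exact h1.le
end

section
/- Fix a constant γ with 0 < γ < 1/2. (i) For every α > 0 there exist β > 0 and d₀ ∈ ℕ such that for all d ≥ d₀ and every unit vector w ∈ ℝ^d, if g is a standard Gaussian vector in ℝ^d and v := g/‖g‖₂, then Pr[⟨v, w⟩ ≥ α·d^{−γ}] ≥ e^{−β·d^{1−2γ}}. (ii) For every α > 0 there exist β' > 0 and d₀' ∈ ℕ such that for all d ≥ d₀' and every unit vector w ∈ ℝ^d, Pr[⟨v, w⟩ ≤ α·d^{−γ}] ≥ 1 − e^{−β'·d^{1−2γ}}. -/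
open MeasureTheory ProbabilityTheory

open Filter Topology

noncomputable abbrev gP (d : ℕ) : Measure (Fin d → ℝ) :=
  Measure.pi fun _ => gaussianReal 0 1

lemma gauss_sq_form (a x : ℝ) :
    gaussianPDFReal 0 1 x * Real.exp (a * x ^ 2)
      = (Real.sqrt (2 * Real.pi))⁻¹ * Real.exp (-(1 / 2 - a) * x ^ 2) := by
  rw [gaussianPDFReal, mul_assoc, ← Real.exp_add]
  simp only [NNReal.coe_one, mul_one, sub_zero]
  congr 2
  ring

lemma gauss_sq_integral (a : ℝ) (ha : a < 1 / 2) :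
    ∫ x, Real.exp (a * x ^ 2) ∂(gaussianReal 0 1) = Real.sqrt (1 / (1 - 2 * a)) := by
  rw [integral_gaussianReal_eq_integral_smul one_ne_zero]
  simp only [smul_eq_mul, gauss_sq_form]
  rw [integral_const_mul, integral_gaussian, ← Real.sqrt_inv, ← Real.sqrt_mul (by positivity)]
  congr 1
  have h1 : (1 / 2 - a) ≠ 0 := by linarith
  have h2 : (1 - 2 * a) ≠ 0 := by linarith
  have := Real.pi_ne_zero
  field_simp

lemma gauss_sq_integrable (a : ℝ) (ha : a < 1 / 2) :
    Integrable (fun x : ℝ => Real.exp (a * x ^ 2)) (gaussianReal 0 1) := by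
  by_contra h
  have h1 := gauss_sq_integral a ha
  rw [integral_undef h] at h1
  have : 0 < Real.sqrt (1 / (1 - 2 * a)) := by
    apply Real.sqrt_pos.2
    apply one_div_pos.2
    linarith
  linarith

lemma sq_chernoff (d : ℕ) (a : ℝ) (ha : a < 1 / 2) (c : ℝ) :
    (gP d).real {g | c ≤ a * ∑ i, g i ^ 2} ≤
      Real.exp (-c) * Real.sqrt (1 / (1 - 2 * a)) ^ d := by
  have hform : (fun g : Fin d → ℝ => Real.exp (1 * (a * ∑ i, g i ^ 2)))
      = fun g => ∏ i, Real.exp (a * g i ^ 2) := by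
    funext g
    rw [one_mul, Finset.mul_sum, Real.exp_sum]
  have h := measure_ge_le_exp_mul_mgf (μ := gP d) (X := fun g => a * ∑ i, g i ^ 2) (t := 1) c
    zero_le_one (by
      rw [hform]
      exact Integrable.fintype_prod (f := fun _ x => Real.exp (a * x ^ 2))
        (fun i => gauss_sq_integrable a ha))
  rw [mgf, hform, integral_fintype_prod_eq_prod (f := fun _ x => Real.exp (a * x ^ 2))] at h
  simpa [gauss_sq_integral a ha] using h

lemma sq_upper (d : ℕ) :
    (gP d).real {g | 4 * (d : ℝ) ≤ ∑ i, g i ^ 2} ≤ Real.exp (-(d : ℝ) / 2) := by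
  have h := sq_chernoff d (1 / 4) (by norm_num) d
  have he : {g : Fin d → ℝ | 4 * (d : ℝ) ≤ ∑ i, g i ^ 2}
      = {g | (d : ℝ) ≤ 1 / 4 * ∑ i, g i ^ 2} := by
    ext g
    simp only [Set.mem_ofPred_eq]
    constructor <;> intro h <;> linarith
  rw [he]
  refine h.trans ?_
  have h2 : Real.sqrt (1 / (1 - 2 * (1 / 4))) ≤ Real.exp (1 / 2) := by
    apply Real.sqrt_le_iff.2
    refine ⟨(Real.exp_pos _).le, ?_⟩
    rw [← Real.exp_nat_mul]
    have := Real.add_one_le_exp (1 : ℝ)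
    norm_num at *
    linarith
  calc _ ≤ Real.exp (-d) * Real.exp (1 / 2) ^ d := by gcongr
    _ = _ := by
      rw [← Real.exp_nat_mul, ← Real.exp_add]
      congr 1
      ring

lemma sq_lower (d : ℕ) :
    (gP d).real {g | ∑ i, g i ^ 2 ≤ (d : ℝ) / 4} ≤ Real.exp (-(d : ℝ) / 4) := by
  have h := sq_chernoff d (-1) (by norm_num) (-(d : ℝ) / 4)
  have he : {g : Fin d → ℝ | ∑ i, g i ^ 2 ≤ (d : ℝ) / 4}
      = {g | -(d : ℝ) / 4 ≤ -1 * ∑ i, g i ^ 2} := by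
    ext g
    simp only [Set.mem_ofPred_eq]
    constructor <;> intro h <;> linarith
  rw [he]
  refine h.trans ?_
  have h2 : Real.sqrt (1 / (1 - 2 * (-1))) ≤ Real.exp (-1 / 2) := by
    apply Real.sqrt_le_iff.2
    refine ⟨(Real.exp_pos _).le, ?_⟩
    rw [← Real.exp_nat_mul]
    have h3 := Real.exp_one_lt_d9
    have h4 : Real.exp ((2 : ℕ) * (-1 / 2)) = (Real.exp 1)⁻¹ := by
      rw [← Real.exp_neg]; norm_num
    rw [h4, one_div]
    apply inv_anti₀ (Real.exp_pos _)
    linarith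
  calc _ ≤ Real.exp (-(-(d : ℝ) / 4)) * Real.exp (-1 / 2) ^ d := by gcongr
    _ = _ := by
      rw [← Real.exp_nat_mul, ← Real.exp_add]
      congr 1
      ring

lemma law_inner (d : ℕ) (w : Fin d → ℝ) (hw : ∑ i, w i ^ 2 = 1) :
    (gP d).map (fun g => ∑ i, g i * w i) = gaussianReal 0 1 := by
  have hm : Measurable (fun g : Fin d → ℝ => ∑ i, g i * w i) := by fun_prop
  have : IsProbabilityMeasure ((gP d).map (fun g => ∑ i, g i * w i)) :=
    Measure.isProbabilityMeasure_map hm.aemeasurable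
  apply Measure.ext_of_charFun
  ext t
  rw [charFun_gaussianReal, charFun_apply_real, integral_map hm.aemeasurable (by fun_prop)]
  have hf : (fun g : Fin d → ℝ => Complex.exp (t * ((∑ i, g i * w i : ℝ) : ℂ) * Complex.I))
      = fun g => ∏ i, Complex.exp (((t * w i : ℝ) : ℂ) * (g i : ℂ) * Complex.I) := by
    funext g
    rw [← Complex.exp_sum]
    congr 1
    push_cast
    rw [Finset.mul_sum, Finset.sum_mul]
    refine Finset.sum_congr rfl fun i _ => ?_
    ring
  rw [hf, integral_fintype_prod_eq_prod
    (f := fun i (x : ℝ) => Complex.exp (((t * w i : ℝ) : ℂ) * (x : ℂ) * Complex.I))]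
  simp_rw [← charFun_apply_real, charFun_gaussianReal]
  rw [← Complex.exp_sum]
  congr 1
  have hw' : ∑ i, (w i : ℂ) ^ 2 = 1 := by exact_mod_cast hw
  have : ∀ i, ((t * w i : ℝ) : ℂ) * ((0 : ℝ) : ℂ) * Complex.I
      - ((1 : NNReal) : ℂ) * ((t * w i : ℝ) : ℂ) ^ 2 / 2 = -(t : ℂ) ^ 2 / 2 * (w i : ℂ) ^ 2 := by
    intro i
    push_cast
    ring
  rw [Finset.sum_congr rfl fun i _ => this i, ← Finset.mul_sum, hw']
  push_cast
  ring

lemma inner_upper (d : ℕ) (w : Fin d → ℝ) (hw : ∑ i, w i ^ 2 = 1) (s : ℝ) (hs : 0 ≤ s) :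
    (gP d).real {g | s ≤ ∑ i, g i * w i} ≤ Real.exp (-s ^ 2 / 2) := by
  have hl := law_inner d w hw
  have hm : Measurable (fun g : Fin d → ℝ => ∑ i, g i * w i) := by fun_prop
  have hi : Integrable (fun g : Fin d → ℝ => Real.exp (s * ∑ i, g i * w i)) (gP d) := by
    have := integrable_exp_mul_gaussianReal (μ := 0) (v := 1) s
    rw [← hl] at this
    exact this.comp_measurable hm
  have h := measure_ge_le_exp_mul_mgf (μ := gP d) (X := fun g => ∑ i, g i * w i) (t := s) s hs hi
  rw [mgf_gaussianReal hl, ← Real.exp_add] at h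
  refine h.trans (le_of_eq ?_)
  congr 1
  push_cast
  ring

lemma inner_lower (d : ℕ) (w : Fin d → ℝ) (hw : ∑ i, w i ^ 2 = 1) (s : ℝ) (hs : 0 ≤ s) :
    (Real.sqrt (2 * Real.pi))⁻¹ * Real.exp (-1) * Real.exp (-s ^ 2) ≤
    (gP d).real {g | s ≤ ∑ i, g i * w i} := by
  have hl := law_inner d w hw
  have hm : Measurable (fun g : Fin d → ℝ => ∑ i, g i * w i) := by fun_prop
  have h1 : (gP d).real {g | s ≤ ∑ i, g i * w i} = (gaussianReal 0 1).real (Set.Ici s) := by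
    rw [← hl, map_measureReal_apply hm measurableSet_Ici]
    rfl
  have h2 : (gaussianReal 0 1).real (Set.Icc s (s + 1)) ≤ (gaussianReal 0 1).real (Set.Ici s) :=
    measureReal_mono Set.Icc_subset_Ici_self
  rw [h1]
  refine le_trans ?_ h2
  rw [measureReal_def, gaussianReal_apply_eq_integral _ one_ne_zero, ENNReal.toReal_ofReal
    (integral_nonneg fun x => gaussianPDFReal_nonneg _ _ _)]
  set K := (Real.sqrt (2 * Real.pi))⁻¹ * Real.exp (-1) * Real.exp (-s ^ 2)
  have h3 : ∫ x in Set.Icc s (s + 1), K = K := by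
    simp
  rw [← h3]
  refine setIntegral_mono_on (by simp) (integrable_gaussianPDFReal 0 1).integrableOn
    measurableSet_Icc ?_
  rintro x ⟨hx1, hx2⟩
  rw [gaussianPDFReal]
  simp only [NNReal.coe_one, mul_one, sub_zero, K]
  rw [mul_assoc, ← Real.exp_add]
  gcongr
  nlinarith [sq_nonneg (s - 1), mul_self_le_mul_self (hs.trans hx1) hx2]

lemma asym (γ : ℝ) (hγ0 : 0 < γ) (hγ : γ < 1 / 2) (A B : ℝ) :
    ∃ d₀ : ℕ, ∀ d : ℕ, d₀ ≤ d → 0 < d ∧ A ≤ (d : ℝ) ^ ((1 : ℝ) - 2 * γ) ∧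
      B * (d : ℝ) ^ ((1 : ℝ) - 2 * γ) ≤ d := by
  have h1 : Tendsto (fun d : ℕ => (d : ℝ) ^ ((1 : ℝ) - 2 * γ)) atTop atTop :=
    (tendsto_rpow_atTop (by linarith)).comp tendsto_natCast_atTop_atTop
  have h2 : Tendsto (fun d : ℕ => (d : ℝ) ^ (2 * γ)) atTop atTop :=
    (tendsto_rpow_atTop (by linarith)).comp tendsto_natCast_atTop_atTop
  have := (eventually_gt_atTop 0).and
    ((h1.eventually_ge_atTop A).and (h2.eventually_ge_atTop B))
  obtain ⟨d₀, h⟩ := eventually_atTop.1 this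
  refine ⟨d₀, fun d hd => ?_⟩
  obtain ⟨h3, h4, h5⟩ := h d hd
  refine ⟨h3, h4, ?_⟩
  have hd0 : (0 : ℝ) < d := by exact_mod_cast h3
  calc B * (d : ℝ) ^ ((1 : ℝ) - 2 * γ) ≤ (d : ℝ) ^ (2 * γ) * (d : ℝ) ^ ((1 : ℝ) - 2 * γ) := by
        gcongr
    _ = d := by
        rw [← Real.rpow_add hd0]
        simp

lemma s_sq (γ α k : ℝ) (d : ℕ) (hd : 0 < d) :
    (α * (d : ℝ) ^ (-γ) * (k * Real.sqrt d)) ^ 2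
      = α ^ 2 * k ^ 2 * (d : ℝ) ^ ((1 : ℝ) - 2 * γ) := by
  have hd0 : (0 : ℝ) < d := by exact_mod_cast hd
  have h1 : ((d : ℝ) ^ (-γ)) ^ 2 = (d : ℝ) ^ (-(2 * γ)) := by
    rw [← Real.rpow_natCast, ← Real.rpow_mul hd0.le]
    congr 1
    push_cast
    ring
  rw [sub_eq_add_neg, Real.rpow_add hd0, Real.rpow_one, mul_pow, mul_pow, mul_pow,
    Real.sq_sqrt hd0.le, h1]
  ring

lemma sum_form (d : ℕ) (g w : Fin d → ℝ) :
    ∑ i, (e2norm g)⁻¹ * g i * w i = (∑ i, g i * w i) / e2norm g := by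
  rw [div_eq_inv_mul, Finset.mul_sum]
  exact Finset.sum_congr rfl fun i _ => by ring

lemma unit_sq (d : ℕ) (w : Fin d → ℝ) (h : e2norm w = 1) : ∑ i, w i ^ 2 = 1 := by
  rwa [e2norm, Real.sqrt_eq_one] at h

lemma part_one (γ : ℝ) (hγ0 : 0 < γ) (hγ : γ < 1 / 2) (α : ℝ) (hα : 0 < α) :
    ∃ (β : ℝ) (d₀ : ℕ), 0 < β ∧
      ∀ d : ℕ, d₀ ≤ d → ∀ w : Fin d → ℝ, e2norm w = 1 →
        Real.exp (-β * (d : ℝ) ^ ((1 : ℝ) - 2 * γ)) ≤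
          (gP d).real {g | α * (d : ℝ) ^ (-γ) ≤ ∑ i, (e2norm g)⁻¹ * g i * w i} := by
  set c := (Real.sqrt (2 * Real.pi))⁻¹ * Real.exp (-1) with hc
  have hc0 : 0 < c := by positivity
  obtain ⟨d₀, h₀⟩ := asym γ hγ0 hγ (-Real.log (c / 2)) (2 * (4 * α ^ 2 + 1))
  refine ⟨4 * α ^ 2 + 1, d₀, by positivity, fun d hd w hw => ?_⟩
  obtain ⟨hd0, hA, hB⟩ := h₀ d hd
  have hd1 : (0 : ℝ) < d := by exact_mod_cast hd0
  have hw := unit_sq d w hw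
  have hs := s_sq γ α 2 d hd0
  set y := (d : ℝ) ^ ((1 : ℝ) - 2 * γ) with hy
  set t := α * (d : ℝ) ^ (-γ) with ht
  have ht0 : 0 < t := by positivity
  set s := t * (2 * Real.sqrt d) with hsd
  have hs0 : 0 < s := by positivity
  have hL := inner_lower d w hw s hs0.le
  have hU := sq_upper d
  have hsub : {g : Fin d → ℝ | s ≤ ∑ i, g i * w i} ⊆
      {g | t ≤ ∑ i, (e2norm g)⁻¹ * g i * w i} ∪ {g | 4 * (d : ℝ) ≤ ∑ i, g i ^ 2} := by
    intro g hg
    simp only [Set.mem_ofPred_eq, Set.mem_union] at hg ⊢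
    by_cases h : 4 * (d : ℝ) ≤ ∑ i, g i ^ 2
    · exact Or.inr h
    left
    push Not at h
    have hn : e2norm g ≤ 2 * Real.sqrt d := by
      rw [e2norm]
      apply Real.sqrt_le_iff.2 ⟨by positivity, ?_⟩
      rw [mul_pow, Real.sq_sqrt hd1.le]
      linarith
    have hn0 : 0 < e2norm g := by
      rw [e2norm]
      apply Real.sqrt_pos.2
      apply lt_of_le_of_ne (Finset.sum_nonneg fun i _ => sq_nonneg _)
      intro h0
      have h1 := (Finset.sum_eq_zero_iff_of_nonneg (fun i _ => sq_nonneg (g i))).1 h0.symm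
      have : ∑ i, g i * w i = 0 := Finset.sum_eq_zero fun i hi => by
        have := h1 i hi
        simp only [ne_eq, OfNat.ofNat_ne_zero, not_false_eq_true, pow_eq_zero_iff] at this
        rw [this, zero_mul]
      linarith
    rw [sum_form, le_div_iff₀ hn0]
    calc t * e2norm g ≤ s := by rw [hsd]; gcongr
      _ ≤ _ := hg
  have h1 := (measureReal_mono (μ := gP d) hsub).trans (measureReal_union_le _ _)
  rw [hs] at hL
  have e1 : Real.exp (-(4 * α ^ 2 + 1) * y) = Real.exp (-y) * Real.exp (-(α ^ 2 * 2 ^ 2 * y)) := by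
    rw [← Real.exp_add]; congr 1; ring
  have e2 : Real.exp (-(d : ℝ) / 2) ≤ Real.exp (-(4 * α ^ 2 + 1) * y) := by
    apply Real.exp_le_exp.2
    linarith
  have e3 : Real.exp (-y) ≤ c / 2 := by
    rw [← Real.le_log_iff_exp_le (by positivity)]
    linarith
  have e4 : Real.exp (-(4 * α ^ 2 + 1) * y) ≤ c / 2 * Real.exp (-(α ^ 2 * 2 ^ 2 * y)) := by
    rw [e1]; gcongr
  linarith

lemma part_two (γ : ℝ) (hγ0 : 0 < γ) (hγ : γ < 1 / 2) (α : ℝ) (hα : 0 < α) :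
    ∃ (β : ℝ) (d₀ : ℕ), 0 < β ∧
      ∀ d : ℕ, d₀ ≤ d → ∀ w : Fin d → ℝ, e2norm w = 1 →
        1 - Real.exp (-β * (d : ℝ) ^ ((1 : ℝ) - 2 * γ)) ≤
          (gP d).real {g | ∑ i, (e2norm g)⁻¹ * g i * w i ≤ α * (d : ℝ) ^ (-γ)} := by
  obtain ⟨d₀, h₀⟩ := asym γ hγ0 hγ (Real.log 2 / (α ^ 2 / 16)) (α ^ 2 / 2)
  refine ⟨α ^ 2 / 16, d₀, by positivity, fun d hd w hw => ?_⟩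
  obtain ⟨hd0, hA, hB⟩ := h₀ d hd
  have hd1 : (0 : ℝ) < d := by exact_mod_cast hd0
  have hw := unit_sq d w hw
  have hs := s_sq γ α (1 / 2) d hd0
  set y := (d : ℝ) ^ ((1 : ℝ) - 2 * γ) with hy
  set t := α * (d : ℝ) ^ (-γ) with ht
  have ht0 : 0 < t := by positivity
  set s := t * (1 / 2 * Real.sqrt d) with hsd
  have hs0 : 0 < s := by positivity
  have hL := inner_upper d w hw s hs0.le
  have hU := sq_lower d
  have hsub : (Set.univ : Set (Fin d → ℝ)) ⊆
      {g | ∑ i, (e2norm g)⁻¹ * g i * w i ≤ t} ∪ ({g | ∑ i, g i ^ 2 ≤ (d : ℝ) / 4} ∪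
        {g | s ≤ ∑ i, g i * w i}) := by
    intro g _
    simp only [Set.mem_ofPred_eq, Set.mem_union]
    by_cases h : ∑ i, g i ^ 2 ≤ (d : ℝ) / 4
    · exact Or.inr (Or.inl h)
    by_cases h' : s ≤ ∑ i, g i * w i
    · exact Or.inr (Or.inr h')
    left
    push Not at h h'
    have hn : 1 / 2 * Real.sqrt d ≤ e2norm g := by
      rw [e2norm]
      apply Real.le_sqrt_of_sq_le
      rw [mul_pow, Real.sq_sqrt hd1.le]
      linarith
    have hn0 : 0 < e2norm g := lt_of_lt_of_le (by positivity) hn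
    rw [sum_form, div_le_iff₀ hn0]
    calc _ ≤ s := h'.le
      _ ≤ _ := by rw [hsd]; gcongr
  have h1 := (measureReal_mono (μ := gP d) hsub).trans (measureReal_union_le _ _)
  have h2 := measureReal_union_le (μ := gP d) {g : Fin d → ℝ | ∑ i, g i ^ 2 ≤ (d : ℝ) / 4}
        {g | s ≤ ∑ i, g i * w i}
  rw [probReal_univ] at h1
  have e0 : -s ^ 2 / 2 = -(α ^ 2 / 8) * y := by rw [hs]; ring
  rw [e0] at hL
  have e1 : Real.exp (-(α ^ 2 / 8) * y)
      = Real.exp (-(α ^ 2 / 16) * y) * Real.exp (-(α ^ 2 / 16) * y) := by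
    rw [← Real.exp_add]; congr 1; ring
  have e2 : Real.exp (-(d : ℝ) / 4) ≤ Real.exp (-(α ^ 2 / 8) * y) := by
    apply Real.exp_le_exp.2
    linarith
  have e3 : Real.exp (-(α ^ 2 / 16) * y) ≤ 1 / 2 := by
    rw [← Real.le_log_iff_exp_le (by positivity), one_div, Real.log_inv]
    rw [div_le_iff₀ (by positivity)] at hA
    linarith
  have e4 : Real.exp (-(α ^ 2 / 8) * y) ≤ Real.exp (-(α ^ 2 / 16) * y) * (1 / 2) := by
    rw [e1]; gcongr
  linarith

/-- Correlation of a random unit vector `v = g/‖g‖` with a fixed unit vector `w`: for any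
fixed `0 < γ < 1/2`, (i) for every `α > 0` there are `β > 0` and `d₀` such that for all
`d ≥ d₀`, `Pr[⟨v,w⟩ ≥ α·d^(−γ)] ≥ e^{−β·d^(1−2γ)}`; and (ii) for every `α > 0` there are
`β' > 0` and `d₀'` with `Pr[⟨v,w⟩ ≤ α·d^(−γ)] ≥ 1 − e^{−β'·d^(1−2γ)}`. -/
theorem stmt7 (γ : ℝ) (hγ0 : 0 < γ) (hγ : γ < 1 / 2) :
    (∀ α : ℝ, 0 < α → ∃ (β : ℝ) (d₀ : ℕ), 0 < β ∧
      ∀ d : ℕ, d₀ ≤ d → ∀ w : Fin d → ℝ, e2norm w = 1 →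
        ENNReal.ofReal (Real.exp (-β * (d : ℝ) ^ ((1 : ℝ) - 2 * γ))) ≤
          stdGaussian d {g | α * (d : ℝ) ^ (-γ) ≤ ∑ i, (e2norm g)⁻¹ * g i * w i}) ∧
    (∀ α : ℝ, 0 < α → ∃ (β' : ℝ) (d₀' : ℕ), 0 < β' ∧
      ∀ d : ℕ, d₀' ≤ d → ∀ w : Fin d → ℝ, e2norm w = 1 →
        ENNReal.ofReal (1 - Real.exp (-β' * (d : ℝ) ^ ((1 : ℝ) - 2 * γ))) ≤
          stdGaussian d {g | ∑ i, (e2norm g)⁻¹ * g i * w i ≤ α * (d : ℝ) ^ (-γ)}) := by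
  constructor
  · intro α hα
    obtain ⟨β, d₀, hβ, h⟩ := part_one γ hγ0 hγ α hα
    refine ⟨β, d₀, hβ, fun d hd w hw => ?_⟩
    exact (ENNReal.ofReal_le_iff_le_toReal (measure_ne_top (gP d) _)).2 (h d hd w hw)
  · intro α hα
    obtain ⟨β, d₀, hβ, h⟩ := part_two γ hγ0 hγ α hα
    refine ⟨β, d₀, hβ, fun d hd w hw => ?_⟩
    exact (ENNReal.ofReal_le_iff_le_toReal (measure_ne_top (gP d) _)).2 (h d hd w hw)
end

section
/- For every α₁ > 0 and α₂ > 0 there exist C > 0 and d₀ ∈ ℕ such that the following holds for all d ≥ d₀. Let w₁, w₂ ∈ ℝ^d be orthonormal vectors, let g be a standard Gaussian vector in ℝ^d, and set v := g/‖g‖₂. Then Pr[ (⟨v, w₁⟩ ≥ α₁·d^{−1/4}) and (⟨v, w₂⟩ ≤ α₂·d^{−1/2}) ] ≥ d^{−C}·Pr[⟨v, w₁⟩ ≥ α₁·d^{−1/4}]. -/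
open MeasureTheory ProbabilityTheory

lemma reflection_facts (d : ℕ) (w₁ w₂ : Fin d → ℝ) (h : (∑ i, w₁ i * w₂ i) = 0) :
    ∃ ρ : (Fin d → ℝ) → (Fin d → ℝ),
      MeasurePreserving ρ (Measure.pi fun _ => gaussianReal 0 1)
        (Measure.pi fun _ => gaussianReal 0 1) ∧
      (∀ g, e2norm (ρ g) = e2norm g) ∧ (∀ g, ∑ i, ρ g i * w₁ i = ∑ i, g i * w₁ i) ∧
      (∀ g, ∑ i, ρ g i * w₂ i = - ∑ i, g i * w₂ i) := by
  have hin : ∀ x y : EuclideanSpace ℝ (Fin d), inner ℝ x y = ∑ i, x i * y i := by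
    intro x y
    simp [PiLp.inner_apply, mul_comm]
  let W₁ : EuclideanSpace ℝ (Fin d) := WithLp.toLp 2 w₁
  let W₂ : EuclideanSpace ℝ (Fin d) := WithLp.toLp 2 w₂
  let R := (Submodule.span ℝ {W₂})ᗮ.reflection
  have hRR : ∀ x, R (R x) = x := Submodule.reflection_reflection _
  have hR₁ : R W₁ = W₁ := by
    apply Submodule.reflection_mem_subspace_eq_self
    rw [Submodule.mem_orthogonal_singleton_iff_inner_left, hin]
    exact h
  have hR₂ : R W₂ = -W₂ := Submodule.reflection_orthogonalComplement_singleton_eq_neg W₂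
  refine ⟨fun g => WithLp.ofLp (R (WithLp.toLp 2 g)), ⟨by fun_prop, ?_⟩, ?_, ?_, ?_⟩
  · have e1 := map_pi_eq_stdGaussian (ι := Fin d)
    have e2 := stdGaussian_map R
    rw [← e1, Measure.map_map (by fun_prop) (by fun_prop)] at e2
    have e3 := congrArg (Measure.map (WithLp.ofLp (p := 2) (V := Fin d → ℝ))) e2
    rw [Measure.map_map (by fun_prop) (by fun_prop),
      Measure.map_map (by fun_prop) (by fun_prop)] at e3
    have e4 : (WithLp.ofLp (p := 2) (V := Fin d → ℝ)) ∘ WithLp.toLp 2 = id := rfl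
    rw [e4, Measure.map_id] at e3
    exact e3
  · intro g
    have := R.norm_map (WithLp.toLp 2 g)
    rw [EuclideanSpace.norm_eq, EuclideanSpace.norm_eq] at this
    simpa only [e2norm, Real.norm_eq_abs, sq_abs] using this
  · intro g
    have := R.inner_map_map (R (WithLp.toLp 2 g)) W₁
    rw [hRR, hR₁, hin, hin] at this
    exact this.symm
  · intro g
    have := R.inner_map_map (R (WithLp.toLp 2 g)) W₂
    rw [hRR, hR₂, inner_neg_right, hin, hin] at this
    exact this.symm

/-- For orthonormal `w₁, w₂` and `v = g/‖g‖` with `g ∼ N(0, I_d)`: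
`Pr[⟨v,w₁⟩ ≥ α₁·d^(−1/4) ∧ ⟨v,w₂⟩ ≤ α₂·d^(−1/2)] ≥ d^(−C)·Pr[⟨v,w₁⟩ ≥ α₁·d^(−1/4)]`. -/
theorem stmt8 (α₁ α₂ : ℝ) (h₁ : 0 < α₁) (h₂ : 0 < α₂) :
    ∃ (C : ℝ) (d₀ : ℕ), 0 < C ∧
      ∀ d : ℕ, d₀ ≤ d →
      ∀ w₁ w₂ : Fin d → ℝ, e2norm w₁ = 1 → e2norm w₂ = 1 → (∑ i, w₁ i * w₂ i) = 0 →
        ENNReal.ofReal ((d : ℝ) ^ (-C)) *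
            stdGaussian d {g | α₁ * (d : ℝ) ^ (-(1 : ℝ) / 4) ≤ ∑ i, (e2norm g)⁻¹ * g i * w₁ i}
          ≤ stdGaussian d
              {g | α₁ * (d : ℝ) ^ (-(1 : ℝ) / 4) ≤ (∑ i, (e2norm g)⁻¹ * g i * w₁ i) ∧
                (∑ i, (e2norm g)⁻¹ * g i * w₂ i) ≤ α₂ * (d : ℝ) ^ (-(1 : ℝ) / 2)} := by
  refine ⟨1, 2, one_pos, ?_⟩
  intro d hd w₁ w₂ _ _ h
  obtain ⟨ρ, hρ, hn, hr₁, hr₂⟩ := reflection_facts d w₁ w₂ h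
  have hsum : ∀ (g w : Fin d → ℝ), ∑ i, (e2norm g)⁻¹ * g i * w i
      = (e2norm g)⁻¹ * ∑ i, g i * w i := by
    intro g w
    simp [Finset.mul_sum, mul_assoc]
  have hd' : (2 : ℝ) ≤ d := by exact_mod_cast hd
  simp only [hsum]
  have hmeas : Measurable (fun g : Fin d → ℝ => e2norm g) := by
    unfold e2norm
    fun_prop
  set a := α₁ * (d : ℝ) ^ (-(1 : ℝ) / 4)
  have hb : 0 ≤ α₂ * (d : ℝ) ^ (-(1 : ℝ) / 2) := by positivity
  set b := α₂ * (d : ℝ) ^ (-(1 : ℝ) / 2)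
  set A := {g : Fin d → ℝ | a ≤ (e2norm g)⁻¹ * ∑ i, g i * w₁ i}
  set B := {g : Fin d → ℝ | a ≤ (e2norm g)⁻¹ * ∑ i, g i * w₁ i ∧
    (e2norm g)⁻¹ * ∑ i, g i * w₂ i ≤ b} with hB
  have hBm : MeasurableSet B := by
    have m₁ : Measurable (fun g : Fin d → ℝ => (e2norm g)⁻¹ * ∑ i, g i * w₁ i) := by fun_prop
    have m₂ : Measurable (fun g : Fin d → ℝ => (e2norm g)⁻¹ * ∑ i, g i * w₂ i) := by fun_prop
    exact (measurableSet_le measurable_const m₁).inter (measurableSet_le m₂ measurable_const)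
  have hsub : A ⊆ B ∪ ρ ⁻¹' B := by
    intro g hg
    have hg' : a ≤ (e2norm g)⁻¹ * ∑ i, g i * w₁ i := hg
    by_cases hc : (e2norm g)⁻¹ * ∑ i, g i * w₂ i ≤ b
    · exact Or.inl ⟨hg', hc⟩
    · refine Or.inr ⟨?_, ?_⟩
      · rw [hn, hr₁]
        exact hg'
      · rw [hn, hr₂]
        linarith
  have hpre : stdGaussian d (ρ ⁻¹' B) = stdGaussian d B :=
    hρ.measure_preimage hBm.nullMeasurableSet
  have hA : stdGaussian d A ≤ 2 * stdGaussian d B := by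
    calc stdGaussian d A ≤ stdGaussian d (B ∪ ρ ⁻¹' B) := measure_mono hsub
      _ ≤ stdGaussian d B + stdGaussian d (ρ ⁻¹' B) := measure_union_le _ _
      _ = 2 * stdGaussian d B := by rw [hpre, two_mul]
  have hc : ENNReal.ofReal ((d : ℝ) ^ (-(1 : ℝ))) ≤ 2⁻¹ := by
    rw [Real.rpow_neg_one, ENNReal.ofReal_inv_of_pos (by linarith)]
    apply ENNReal.inv_le_inv.2
    rw [ENNReal.ofReal_natCast]
    exact_mod_cast hd
  calc ENNReal.ofReal ((d : ℝ) ^ (-(1 : ℝ))) * stdGaussian d A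
      ≤ 2⁻¹ * (2 * stdGaussian d B) := mul_le_mul' hc hA
    _ = stdGaussian d B := by
      rw [← mul_assoc, ENNReal.inv_mul_cancel (by norm_num) (by norm_num), one_mul]
end

section
/- Let k ≥ 1 and d ≥ 1, and let σ₁,…,σ_k, σ'₁,…,σ'_k > 0 satisfy ∑_{i=1}^k σ_i^{2ℓ} = ∑_{i=1}^k (σ'_i)^{2ℓ} for every ℓ = 1,…,k−1. Let v ∈ ℝ^d be a unit vector. Let D₁ be the distribution on ℝ^{d+1} of the pair (x, ⟨w, x⟩), where x is a standard Gaussian vector in ℝ^d and w is drawn independently and uniformly from the 2k vectors {σ₁v, −σ₁v, …, σ_kv, −σ_kv}; let D₂ be defined analogously with σ'₁,…,σ'_k in place of σ₁,…,σ_k. Then for every integer s with 0 ≤ s ≤ 2k−1 and every (x̄, y) ∈ ℝ^d × ℝ, E_{(X,Y)∼D₁}[(⟨x̄, X⟩ + y·Y)^s] = E_{(X,Y)∼D₂}[(⟨x̄, X⟩ + y·Y)^s]; that is, D₁ and D₂ agree on all moments of degree at most 2k−1. -/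
open MeasureTheory ProbabilityTheory

/-- The distribution on `ℝ^d × ℝ` of `(x, ⟨w, x⟩)` where `x ∼ N(0, I_d)` and `w` is drawn
uniformly from `{±σ₁v, …, ±σ_k v}` (encoded by an index in `Fin k × Bool`). -/
noncomputable def signedMixDist (d k : ℕ) (σ : Fin k → ℝ) (v : Fin d → ℝ) :
    Measure ((Fin d → ℝ) × ℝ) :=
  Measure.map
    (fun ω : (Fin d → ℝ) × (Fin k × Bool) =>
      (ω.1, ∑ l, (if ω.2.2 then σ ω.2.1 else -σ ω.2.1) * v l * ω.1 l))
    ((stdGaussian d).prod ((2 * (k : ENNReal))⁻¹ • Measure.count))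

lemma gauss_integrable_pow (d : ℕ) (c : Fin d → ℝ) (s : ℕ) :
    Integrable (fun x : Fin d → ℝ => (∑ l, c l * x l) ^ s) (stdGaussian d) := by
  unfold _root_.stdGaussian
  have h : MemLp (fun x : Fin d → ℝ => ∑ l, c l * x l) (s : ENNReal)
      (Measure.pi fun _ : Fin d => gaussianReal 0 1) := by
    refine memLp_finset_sum _ fun l _ => ?_
    refine MemLp.const_mul ?_ _
    have h1 : MemLp (id : ℝ → ℝ) (s : ENNReal) (gaussianReal 0 1) :=
      memLp_id_gaussianReal' _ (by simp)
    exact h1.comp_measurePreserving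
      (measurePreserving_eval (fun _ : Fin d => gaussianReal 0 1) l)
  have h2 := h.integrable_norm_pow'
  refine h2.mono' (Measurable.aestronglyMeasurable (by fun_prop)) (ae_of_all _ fun x => ?_)
  simp [norm_pow]

lemma mix_integral (k d : ℕ) (hk : 1 ≤ k) (σ : Fin k → ℝ) (v : Fin d → ℝ) (s : ℕ)
    (xbar : Fin d → ℝ) (y : ℝ) :
    (∫ q : (Fin d → ℝ) × ℝ, ((∑ l, xbar l * q.1 l) + y * q.2) ^ s ∂signedMixDist d k σ v)
    = ∫ x : Fin d → ℝ, ((2 * (k : ENNReal))⁻¹).toReal • ∑ i : Fin k,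
        (((∑ l, xbar l * x l) + y * (σ i * ∑ l, v l * x l)) ^ s
        + ((∑ l, xbar l * x l) + y * (-σ i * ∑ l, v l * x l)) ^ s) ∂stdGaussian d := by
  have hfin : (2 * (k : ENNReal))⁻¹ ≠ ⊤ := by
    simp; omega
  have : IsFiniteMeasure ((2 * (k : ENNReal))⁻¹ • (Measure.count : Measure (Fin k × Bool))) :=
    Measure.smul_finite _ hfin
  have : IsProbabilityMeasure (stdGaussian d) := by unfold _root_.stdGaussian; infer_instance
  have hc : Measurable (fun ω : (Fin d → ℝ) × (Fin k × Bool) =>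
      (if ω.2.2 then σ ω.2.1 else -σ ω.2.1)) :=
    (Measurable.of_discrete (f := fun p : Fin k × Bool =>
      (if p.2 then σ p.1 else -σ p.1))).comp measurable_snd
  have hm : Measurable (fun ω : (Fin d → ℝ) × (Fin k × Bool) =>
      (ω.1, ∑ l, (if ω.2.2 then σ ω.2.1 else -σ ω.2.1) * v l * ω.1 l)) := by
    refine measurable_fst.prodMk (Finset.measurable_sum _ fun l _ => ?_)
    exact (hc.mul_const _).mul ((measurable_pi_apply l).comp measurable_fst)
  have hg : Measurable (fun q : (Fin d → ℝ) × ℝ => ((∑ l, xbar l * q.1 l) + y * q.2) ^ s) := by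
    fun_prop
  unfold signedMixDist
  rw [integral_map hm.aemeasurable hg.aestronglyMeasurable]
  rw [integral_prod]
  · congr 1
    ext x
    rw [integral_smul_measure, integral_count, Fintype.sum_prod_type]
    simp [Finset.mul_sum, mul_assoc]
  · refine (integrable_prod_iff' (hg.comp hm).aestronglyMeasurable).2 ?_
    refine ⟨ae_of_all _ fun p => ?_, Integrable.of_finite⟩
    have := gauss_integrable_pow d
      (fun l => xbar l + y * ((if p.2 then σ p.1 else -σ p.1) * v l)) s
    refine this.congr (ae_of_all _ fun x => ?_)
    simp only [Function.comp_apply]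
    congr 1
    simp only [Finset.mul_sum, ← Finset.sum_add_distrib]
    refine Finset.sum_congr rfl fun l _ => ?_
    ring

lemma sum_pow_expand (k : ℕ) (σ : Fin k → ℝ) (a b : ℝ) (s : ℕ) :
    ∑ i, ((a + b * σ i) ^ s + (a - b * σ i) ^ s)
    = ∑ j ∈ Finset.range (s + 1), (b ^ j * a ^ (s - j) * s.choose j * (1 + (-1) ^ j))
        * ∑ i, σ i ^ j := by
  simp only [Finset.mul_sum]
  rw [Finset.sum_comm]
  refine Finset.sum_congr rfl fun i _ => ?_
  rw [add_comm a, sub_eq_add_neg, add_comm a, add_pow, add_pow, ← Finset.sum_add_distrib]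
  refine Finset.sum_congr rfl fun j _ => ?_
  rw [neg_pow (b * σ i), mul_pow]
  ring

/-- If the power sums `∑ σᵢ^(2ℓ)` and `∑ (σ'ᵢ)^(2ℓ)` match for `1 ≤ ℓ ≤ k−1`, then the two
distributions of `(x, ⟨w, x⟩)` (with `w` uniform on `{±σᵢv}` resp. `{±σ'ᵢv}`) agree on all
moments of degree at most `2k−1`: for every direction `(x̄, y)`,
`E[(⟨x̄,X⟩ + y·Y)^s]` coincides for `s ≤ 2k−1`. -/
theorem stmt13 (k d : ℕ) (hk : 1 ≤ k) (hd : 1 ≤ d)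
    (σ σ' : Fin k → ℝ) (hσ : ∀ i, 0 < σ i) (hσ' : ∀ i, 0 < σ' i)
    (hmatch : ∀ ℓ : ℕ, 1 ≤ ℓ → ℓ ≤ k - 1 → (∑ i, σ i ^ (2 * ℓ)) = ∑ i, σ' i ^ (2 * ℓ))
    (v : Fin d → ℝ) (hv : e2norm v = 1) :
    ∀ s : ℕ, s ≤ 2 * k - 1 → ∀ (xbar : Fin d → ℝ) (y : ℝ),
      (∫ q : (Fin d → ℝ) × ℝ, ((∑ l, xbar l * q.1 l) + y * q.2) ^ s
          ∂signedMixDist d k σ v)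
        = ∫ q : (Fin d → ℝ) × ℝ, ((∑ l, xbar l * q.1 l) + y * q.2) ^ s
          ∂signedMixDist d k σ' v := by
  intro s hs xbar y
  rw [mix_integral k d hk, mix_integral k d hk]
  congr 1
  ext x
  congr 1
  have key : ∀ τ : Fin k → ℝ, ∑ i : Fin k,
        (((∑ l, xbar l * x l) + y * (τ i * ∑ l, v l * x l)) ^ s
        + ((∑ l, xbar l * x l) + y * (-τ i * ∑ l, v l * x l)) ^ s)
      = ∑ i, (((∑ l, xbar l * x l) + (y * ∑ l, v l * x l) * τ i) ^ s
        + ((∑ l, xbar l * x l) - (y * ∑ l, v l * x l) * τ i) ^ s) := by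
    intro τ
    refine Finset.sum_congr rfl fun i _ => ?_
    congr 2 <;> ring
  rw [key, key, sum_pow_expand, sum_pow_expand]
  refine Finset.sum_congr rfl fun j hj => ?_
  rw [Finset.mem_range] at hj
  rcases Nat.even_or_odd j with he | ho
  · obtain ⟨m, rfl⟩ := he.two_dvd
    rcases Nat.eq_zero_or_pos m with rfl | hm
    · simp
    · rw [hmatch m hm (by omega)]
  · simp [ho.neg_one_pow]
end

section
/- Let d ≥ 1, let a, b ∈ ℝ^d with b ≠ 0, let ς ≥ 0, and let ξ satisfy 0 < ξ ≤ ‖b‖₂. Let x be a standard Gaussian vector in ℝ^d and let g ∼ N(0, ς²) be independent of x (with g ≡ 0 when ς = 0). Then | E[ 1{|⟨b,x⟩ + g| ≥ ξ} · ( −cos(π·ξ^{−1}·(⟨b,x⟩ + g)) / (⟨b,x⟩ + g) ) · ⟨a,x⟩ ] | ≤ (‖a‖₂/‖b‖₂) · (‖b‖₂²/(ς² + ‖b‖₂²)) · 0.26·ξ³/(ς² + ‖b‖₂²)^{3/2}. -/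
open MeasureTheory ProbabilityTheory

lemma aux_tendsto (n : ℕ) :
    Filter.Tendsto (fun y : ℝ => y ^ n * Real.exp (-(y ^ 2 / 2))) Filter.atTop (nhds 0) := by
  refine squeeze_zero' ?_ ?_ (Real.tendsto_pow_mul_exp_neg_atTop_nhds_zero n)
  · filter_upwards [Filter.eventually_ge_atTop 0] with y hy
    positivity
  · filter_upwards [Filter.eventually_ge_atTop 2] with y hy
    have : Real.exp (-(y ^ 2 / 2)) ≤ Real.exp (-y) := by
      apply Real.exp_le_exp.2; nlinarith
    gcongr

lemma aux_deriv (y : ℝ) :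
    HasDerivAt (fun y : ℝ => Real.exp (-(y ^ 2 / 2))) (-y * Real.exp (-(y ^ 2 / 2))) y := by
  have h := (((hasDerivAt_pow 2 y).div_const 2).neg).exp
  refine h.congr_deriv ?_
  simp only [Pi.neg_apply]
  push_cast
  ring

lemma aux_B (t : ℝ) (ht : 0 < t) :
    IntegrableOn (fun y : ℝ => (y ^ 3 + 3 * y) * Real.exp (-(y ^ 2 / 2))) (Set.Ioi t) ∧
    ∫ y in Set.Ioi t, (y ^ 3 + 3 * y) * Real.exp (-(y ^ 2 / 2)) ≤ 5 := by
  have hd : ∀ y ∈ Set.Ici t, HasDerivAt (fun y : ℝ => -((y ^ 2 + 5) * Real.exp (-(y ^ 2 / 2))))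
      ((y ^ 3 + 3 * y) * Real.exp (-(y ^ 2 / 2))) y := by
    intro y _
    have h := (((hasDerivAt_pow 2 y).add_const 5).mul (aux_deriv y)).neg
    refine h.congr_deriv ?_
    push_cast
    ring
  have hp : ∀ y ∈ Set.Ioi t, 0 ≤ (y ^ 3 + 3 * y) * Real.exp (-(y ^ 2 / 2)) := by
    intro y hy
    have : 0 < y := ht.trans hy
    positivity
  have hl : Filter.Tendsto (fun y : ℝ => -((y ^ 2 + 5) * Real.exp (-(y ^ 2 / 2))))
      Filter.atTop (nhds 0) := by
    have h := ((aux_tendsto 2).add ((aux_tendsto 0).const_mul 5)).neg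
    simp only [mul_zero, add_zero, neg_zero] at h
    refine h.congr fun y => ?_
    ring
  refine ⟨integrableOn_Ioi_deriv_of_nonneg' hd hp hl, ?_⟩
  rw [integral_Ioi_of_hasDerivAt_of_nonneg' hd hp hl]
  have h1 : Real.exp (-(t ^ 2 / 2)) * Real.exp (t ^ 2 / 2) = 1 := by
    rw [← Real.exp_add]; simp
  have h2 := Real.add_one_le_exp (t ^ 2 / 2)
  have h3 := Real.exp_pos (-(t ^ 2 / 2))
  nlinarith [mul_le_mul_of_nonneg_left h2 h3.le, mul_nonneg (sq_nonneg t) h3.le]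

lemma aux_ioi (t : ℝ) (ht : 0 < t) :
    |∫ y in Set.Ioi t, Real.cos (Real.pi / t * y) * Real.exp (-(y ^ 2 / 2))| ≤
      t ^ 3 * (1 / Real.pi ^ 2 + 5 / Real.pi ^ 3) := by
  have hpi := Real.pi_pos
  obtain ⟨w, hw⟩ : ∃ w, w = Real.pi / t := ⟨_, rfl⟩
  have hw0 : 0 < w := by rw [hw]; positivity
  obtain ⟨hB, hB5⟩ := aux_B t ht
  rw [← hw]
  have hci : Integrable (fun y : ℝ => Real.cos (w * y) * Real.exp (-(y ^ 2 / 2))) := by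
    have h0 : Integrable (fun y : ℝ => Real.exp (-(y ^ 2 / 2))) := by
      refine (integrable_exp_neg_mul_sq (b := 1 / 2) (by norm_num)).congr (ae_of_all _ fun y => ?_)
      show Real.exp _ = Real.exp _
      congr 1; ring
    refine h0.bdd_mul (c := 1) (by fun_prop) (ae_of_all _ fun y => ?_)
    simpa using Real.abs_cos_le_one _
  have hbd : ∀ y ∈ Set.Ioi t, ‖Real.sin (w * y) * (3 * y - y ^ 3) * Real.exp (-(y ^ 2 / 2))‖ ≤
      (y ^ 3 + 3 * y) * Real.exp (-(y ^ 2 / 2)) := by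
    intro y hy
    have hy0 : 0 < y := ht.trans hy
    rw [norm_mul, norm_mul, Real.norm_eq_abs, Real.norm_eq_abs, Real.norm_eq_abs, Real.abs_exp]
    gcongr
    have h1 := Real.abs_sin_le_one (w * y)
    have h2 : |3 * y - y ^ 3| ≤ y ^ 3 + 3 * y := by
      have := pow_pos hy0 3
      rw [abs_le]; constructor <;> linarith
    calc _ ≤ 1 * (y ^ 3 + 3 * y) := by gcongr
      _ = _ := one_mul _
  have hsi : IntegrableOn (fun y : ℝ => Real.sin (w * y) * (3 * y - y ^ 3) * Real.exp (-(y ^ 2 / 2)))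
      (Set.Ioi t) := by
    refine hB.mono' (by fun_prop) ?_
    exact (ae_restrict_iff' measurableSet_Ioi).2 (ae_of_all _ hbd)
  have hsb : |∫ y in Set.Ioi t, Real.sin (w * y) * (3 * y - y ^ 3) * Real.exp (-(y ^ 2 / 2))| ≤ 5 := by
    rw [← Real.norm_eq_abs]
    refine (norm_integral_le_of_norm_le hB ?_).trans hB5
    exact (ae_restrict_iff' measurableSet_Ioi).2 (ae_of_all _ hbd)
  have hd : ∀ y ∈ Set.Ici t, HasDerivAt (fun y : ℝ =>
      (Real.sin (w * y) / w - y * Real.cos (w * y) / w ^ 2 - (y ^ 2 - 1) * Real.sin (w * y) / w ^ 3)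
        * Real.exp (-(y ^ 2 / 2)))
      (Real.cos (w * y) * Real.exp (-(y ^ 2 / 2)) -
        (Real.sin (w * y) * (3 * y - y ^ 3) * Real.exp (-(y ^ 2 / 2))) / w ^ 3) y := by
    intro y _
    have hl : HasDerivAt (fun y : ℝ => w * y) w y := by
      simpa using (hasDerivAt_id y).const_mul w
    have hs := hl.sin
    have hc := hl.cos
    have h := ((((hs.div_const w).sub (((hasDerivAt_id y).mul hc).div_const (w ^ 2))).sub
      ((((hasDerivAt_pow 2 y).sub_const 1).mul hs).div_const (w ^ 3)))).mul (aux_deriv y)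
    refine h.congr_deriv ?_
    simp only [Pi.neg_apply, Pi.sub_apply, Pi.mul_apply, Pi.add_apply, id]
    push_cast
    field_simp
    ring
  have hlim : Filter.Tendsto (fun y : ℝ =>
      (Real.sin (w * y) / w - y * Real.cos (w * y) / w ^ 2 - (y ^ 2 - 1) * Real.sin (w * y) / w ^ 3)
        * Real.exp (-(y ^ 2 / 2))) Filter.atTop (nhds 0) := by
    have h := (((aux_tendsto 0).mul_const (1 / w)).add ((aux_tendsto 1).mul_const (1 / w ^ 2))).add
      (((aux_tendsto 2).add (aux_tendsto 0)).mul_const (1 / w ^ 3))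
    simp only [zero_mul, add_zero] at h
    refine squeeze_zero_norm' ?_ h
    filter_upwards [Filter.eventually_ge_atTop 0] with y hy
    have h1 := Real.abs_sin_le_one (w * y)
    have h2 := Real.abs_cos_le_one (w * y)
    have h3 : |y ^ 2 - 1| ≤ y ^ 2 + 1 := by
      rw [abs_le]; constructor <;> nlinarith [sq_nonneg y]
    rw [Real.norm_eq_abs, abs_mul, Real.abs_exp]
    calc _ ≤ (1 / w + y * 1 / w ^ 2 + (y ^ 2 + 1) * 1 / w ^ 3) * Real.exp (-(y ^ 2 / 2)) := by
          gcongr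
          refine (abs_sub _ _).trans (add_le_add ((abs_sub _ _).trans (add_le_add ?_ ?_)) ?_)
          · rw [abs_div, abs_of_pos hw0]; gcongr
          · rw [abs_div, abs_mul, abs_of_nonneg hy, abs_of_pos (pow_pos hw0 2)]; gcongr
          · rw [abs_div, abs_mul, abs_of_pos (pow_pos hw0 3)]; gcongr
      _ = _ := by ring
  have key := integral_Ioi_of_hasDerivAt_of_tendsto' hd
    (hci.integrableOn.sub (hsi.div_const _)) hlim
  rw [integral_sub hci.integrableOn (hsi.div_const _), integral_div] at key
  have hwt : w * t = Real.pi := by rw [hw]; field_simp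
  rw [hwt, Real.sin_pi, Real.cos_pi] at key
  set S := ∫ y in Set.Ioi t, Real.sin (w * y) * (3 * y - y ^ 3) * Real.exp (-(y ^ 2 / 2))
  have e : (∫ y in Set.Ioi t, Real.cos (w * y) * Real.exp (-(y ^ 2 / 2))) =
      S / w ^ 3 - t / w ^ 2 * Real.exp (-(t ^ 2 / 2)) := by
    linear_combination key
  rw [e]
  have hE : Real.exp (-(t ^ 2 / 2)) ≤ 1 := by
    apply Real.exp_le_one_iff.2; nlinarith [sq_nonneg t]
  calc _ ≤ |S / w ^ 3| + |t / w ^ 2 * Real.exp (-(t ^ 2 / 2))| := abs_sub _ _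
    _ ≤ 5 / w ^ 3 + t / w ^ 2 * 1 := by
      rw [abs_div, abs_of_pos (pow_pos hw0 3), abs_of_nonneg (by positivity : 0 ≤ t / w ^ 2 * Real.exp (-(t ^ 2 / 2)))]
      gcongr
    _ = _ := by rw [hw]; field_simp; ring

lemma aux_std (t : ℝ) (ht : 0 < t) :
    |∫ y, (if t ≤ |y| then Real.cos (Real.pi / t * y) else 0) ∂(gaussianReal 0 1)| ≤
      0.26 * t ^ 3 := by
  have hpi := Real.pi_pos
  rw [integral_gaussianReal_eq_integral_smul one_ne_zero]
  have e : ∀ y : ℝ, gaussianPDFReal 0 1 y • (if t ≤ |y| then Real.cos (Real.pi / t * y) else 0) =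
      (√(2 * Real.pi))⁻¹ * (fun y : ℝ => (Set.Ici t).indicator
        (fun y => Real.cos (Real.pi / t * y) * Real.exp (-(y ^ 2 / 2))) y) |y| := by
    intro y
    simp only [gaussianPDFReal, Set.indicator, Set.mem_Ici, smul_eq_mul]
    split_ifs with h
    · have : Real.cos (Real.pi / t * y) = Real.cos (Real.pi / t * |y|) := by
        rw [← Real.cos_abs, abs_mul, abs_of_pos (by positivity : 0 < Real.pi / t)]
      rw [this, sq_abs]
      simp
      ring_nf
    · simp
  simp_rw [e]
  rw [integral_const_mul, integral_comp_abs (f := fun y : ℝ => (Set.Ici t).indicator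
        (fun y => Real.cos (Real.pi / t * y) * Real.exp (-(y ^ 2 / 2))) y),
    setIntegral_indicator measurableSet_Ici,
    Set.inter_eq_self_of_subset_right ((Set.Ici_subset_Ioi).2 ht),
    integral_Ici_eq_integral_Ioi, abs_mul, abs_mul]
  have h := aux_ioi t ht
  have h3 := Real.pi_gt_d2
  have h2 : (√(2 * Real.pi))⁻¹ ≤ 0.4 := by
    rw [inv_le_comm₀ (by positivity) (by norm_num)]
    apply Real.le_sqrt_of_sq_le
    norm_num at h3 ⊢; linarith
  have hq2 : 1 / Real.pi ^ 2 ≤ 1 / 3.14 ^ 2 := by gcongr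
  have hq3 : 5 / Real.pi ^ 3 ≤ 5 / 3.14 ^ 3 := by gcongr
  calc _ ≤ 0.4 * (2 * (t ^ 3 * (1 / 3.14 ^ 2 + 5 / 3.14 ^ 3))) := by
        rw [abs_of_pos (by positivity : 0 < (√(2 * Real.pi))⁻¹), abs_of_pos (by norm_num : (0:ℝ) < 2)]
        gcongr
        exact h.trans (by gcongr)
    _ ≤ _ := by
        have := pow_pos ht 3
        norm_num
        nlinarith

lemma aux_var (v : ℝ) (hv : 0 < v) (ξ : ℝ) (hξ : 0 < ξ) :
    |∫ y, (if ξ ≤ |y| then Real.cos (Real.pi * ξ⁻¹ * y) else 0) ∂(gaussianReal 0 v.toNNReal)| ≤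
      0.26 * ξ ^ 3 / v ^ ((3 : ℝ) / 2) := by
  have hs : 0 < √v := Real.sqrt_pos.2 hv
  have hm := gaussianReal_map_const_mul (μ := 0) (v := 1) (√v)
  have e : gaussianReal 0 v.toNNReal = (gaussianReal 0 1).map (√v * ·) := by
    rw [hm]
    congr 1
    · simp
    · ext; simp [Real.sq_sqrt hv.le, hv.le]
  have hme : Measurable (fun y : ℝ => if ξ ≤ |y| then Real.cos (Real.pi * ξ⁻¹ * y) else 0) :=
    Measurable.ite (measurableSet_le (by fun_prop) (by fun_prop)) (by fun_prop) (by fun_prop)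
  rw [e, integral_map (by fun_prop) hme.aestronglyMeasurable]
  have h := aux_std (ξ / √v) (by positivity)
  have h32 : v ^ ((3 : ℝ) / 2) = √v ^ 3 := by
    rw [Real.sqrt_eq_rpow, ← Real.rpow_natCast, ← Real.rpow_mul hv.le]; norm_num
  rw [h32]
  have e2 : (0.26 * ξ ^ 3 / √v ^ 3 : ℝ) = 0.26 * (ξ / √v) ^ 3 := by rw [div_pow]; ring
  rw [e2]
  convert h using 4 with y
  have h1 : ξ ≤ |√v * y| ↔ ξ / √v ≤ |y| := by
    rw [abs_mul, abs_of_pos hs, div_le_iff₀ hs, mul_comm]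
  have h2 : Real.pi * ξ⁻¹ * (√v * y) = Real.pi / (ξ / √v) * y := by field_simp
  simp only [h1, h2]

lemma aux_main {Ω : Type*} [MeasurableSpace Ω] {P : Measure Ω} [IsProbabilityMeasure P]
    (A Z : Ω → ℝ) (hA : Measurable A) (hZ : Measurable Z)
    (hG : HasGaussianLaw (fun ω => (A ω, Z ω)) P) (hA0 : ∫ ω, A ω ∂P = 0) (hZ0 : ∫ ω, Z ω ∂P = 0)
    (s v : ℝ) (hv : 0 < v) (hs : cov[A, Z; P] = s) (hvv : cov[Z, Z; P] = v)
    (ξ : ℝ) (hξ : 0 < ξ) :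
    |∫ ω, (if ξ ≤ |Z ω| then -Real.cos (Real.pi * ξ⁻¹ * Z ω) / Z ω * A ω else 0) ∂P| ≤
      |s| / v * (0.26 * ξ ^ 3 / v ^ ((3 : ℝ) / 2)) := by
  have hAL : MemLp A 2 P := hG.fst.memLp_two
  have hZL : MemLp Z 2 P := hG.snd.memLp_two
  set c := s / v with hc
  set W : Ω → ℝ := fun ω => A ω - c * Z ω with hW
  have hWZ : HasGaussianLaw (fun ω => (W ω, Z ω)) P := by
    have := hG.map_fun ((ContinuousLinearMap.fst ℝ ℝ ℝ - c • ContinuousLinearMap.snd ℝ ℝ ℝ).prod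
      (ContinuousLinearMap.snd ℝ ℝ ℝ))
    simpa [hW] using this
  have hcov : cov[W, Z; P] = 0 := by
    have : W = A - c • Z := by ext; simp [hW]
    rw [this, covariance_sub_left hAL (hZL.const_smul c) hZL, covariance_smul_left, hs, hvv, hc]
    field_simp
    ring
  have hI := hWZ.indepFun_of_covariance_eq_zero hcov
  set h : ℝ → ℝ := fun z => if ξ ≤ |z| then -Real.cos (Real.pi * ξ⁻¹ * z) / z else 0 with hh
  have hhm : Measurable h :=
    Measurable.ite (measurableSet_le (by fun_prop) (by fun_prop)) (by fun_prop) (by fun_prop)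
  have hhb : ∀ z, ‖h z‖ ≤ 1 / ξ := by
    intro z
    simp only [hh]
    split_ifs with hz
    · rw [norm_div, norm_neg, Real.norm_eq_abs, Real.norm_eq_abs]
      gcongr
      exact Real.abs_cos_le_one _
    · simp; positivity
  have hWi : Integrable W P := (hAL.integrable one_le_two).sub ((hZL.integrable one_le_two).const_mul c)
  have hW0 : ∫ ω, W ω ∂P = 0 := by
    rw [hW, integral_sub (hAL.integrable one_le_two) ((hZL.integrable one_le_two).const_mul c),
      integral_const_mul, hA0, hZ0]; simp
  have hI2 : IndepFun W (fun ω => h (Z ω)) P := hI.comp measurable_id hhm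
  have h0 : ∫ ω, W ω * h (Z ω) ∂P = 0 := by
    rw [hI2.integral_fun_mul_eq_mul_integral hWi.aestronglyMeasurable
      (hhm.comp hZ).aestronglyMeasurable, hW0, zero_mul]
  set k : ℝ → ℝ := fun y => if ξ ≤ |y| then Real.cos (Real.pi * ξ⁻¹ * y) else 0 with hk
  have hkm : Measurable k :=
    Measurable.ite (measurableSet_le (by fun_prop) (by fun_prop)) (by fun_prop) (by fun_prop)
  have hkb : ∀ z, ‖k z‖ ≤ 1 := by
    intro z
    simp only [hk]
    split_ifs with hz
    · exact Real.abs_cos_le_one _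
    · simp
  have hki : Integrable (fun ω => k (Z ω)) P :=
    Integrable.of_bound (hkm.comp hZ).aestronglyMeasurable 1 (ae_of_all _ fun ω => hkb _)
  have hWhi : Integrable (fun ω => W ω * h (Z ω)) P :=
    hWi.mul_bdd (c := 1 / ξ) (hhm.comp hZ).aestronglyMeasurable (ae_of_all _ fun ω => hhb _)
  have e : ∀ ω, (if ξ ≤ |Z ω| then -Real.cos (Real.pi * ξ⁻¹ * Z ω) / Z ω * A ω else 0) =
      W ω * h (Z ω) - c * k (Z ω) := by
    intro ω
    simp only [hh, hk, hW]
    split_ifs with hz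
    · have : Z ω ≠ 0 := by
        intro h0; rw [h0, abs_zero] at hz; linarith
      field_simp
      ring
    · simp
  simp_rw [e]
  rw [integral_sub hWhi (hki.const_mul c), h0, integral_const_mul, zero_sub, abs_neg, abs_mul]
  have hlaw := hG.snd.map_eq_gaussianReal
  have hZv : Var[Z; P] = v := by rw [← hvv, covariance_self hZ.aemeasurable]
  change P.map Z = gaussianReal (∫ ω, Z ω ∂P) Var[Z; P].toNNReal at hlaw
  rw [hZ0, hZv] at hlaw
  rw [← integral_map hZ.aemeasurable hkm.aestronglyMeasurable, hlaw, hc, abs_div, abs_of_pos hv]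
  gcongr
  exact aux_var v hv ξ hξ

/-- For `x ∼ N(0, I_d)` and independent `g ∼ N(0, ς²)`, and any `0 < ξ ≤ ‖b‖`:
`|E[1{|⟨b,x⟩+g| ≥ ξ}·(−cos(πξ⁻¹(⟨b,x⟩+g))/(⟨b,x⟩+g))·⟨a,x⟩]|
  ≤ (‖a‖/‖b‖)·(‖b‖²/(ς²+‖b‖²))·0.26ξ³/(ς²+‖b‖²)^(3/2)`. -/
theorem stmt14 (d : ℕ) (hd : 1 ≤ d) (a b : Fin d → ℝ) (hb : b ≠ 0)
    (ς : ℝ) (hς : 0 ≤ ς) (ξ : ℝ) (hξ0 : 0 < ξ) (hξ : ξ ≤ e2norm b) :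
    |∫ q : (Fin d → ℝ) × ℝ,
        (if ξ ≤ |(∑ i, b i * q.1 i) + q.2| then
          -Real.cos (Real.pi * ξ⁻¹ * ((∑ i, b i * q.1 i) + q.2)) /
              ((∑ i, b i * q.1 i) + q.2) * (∑ i, a i * q.1 i)
        else 0)
      ∂((stdGaussian d).prod (gaussianReal 0 ⟨ς ^ 2, sq_nonneg ς⟩))|
    ≤ e2norm a / e2norm b * (e2norm b ^ 2 / (ς ^ 2 + e2norm b ^ 2)) *
        (0.26 * ξ ^ 3 / (ς ^ 2 + e2norm b ^ 2) ^ ((3 : ℝ) / 2)) := by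
  have hbpos : 0 < e2norm b := hξ0.trans_le hξ
  have hb2 : e2norm b ^ 2 = ∑ i, b i ^ 2 := Real.sq_sqrt (Finset.sum_nonneg fun i _ => sq_nonneg _)
  set V : NNReal := ⟨ς ^ 2, sq_nonneg ς⟩ with hV
  have : IsProbabilityMeasure (stdGaussian d) := by unfold _root_.stdGaussian; infer_instance
  set P := (stdGaussian d).prod (gaussianReal 0 V) with hP
  have mfst : MeasurePreserving Prod.fst P (stdGaussian d) := measurePreserving_fst
  have msnd : MeasurePreserving Prod.snd P (gaussianReal 0 V) := measurePreserving_snd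
  have mev : ∀ i, MeasurePreserving (fun x : Fin d → ℝ => x i) (stdGaussian d) (gaussianReal 0 1) :=
    fun i => measurePreserving_eval (fun _ => gaussianReal 0 1) i
  have mX : ∀ i, MeasurePreserving (fun q : (Fin d → ℝ) × ℝ => q.1 i) P (gaussianReal 0 1) :=
    fun i => (mev i).comp mfst
  -- the joint law
  have hgx : HasGaussianLaw (fun x : Fin d → ℝ => x) (stdGaussian d) := by
    refine iIndepFun.hasGaussianLaw (X := fun i (x : Fin d → ℝ) => x i) (fun i => ⟨?_⟩) ?_
    · rw [(mev i).map_eq]; infer_instance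
    · exact iIndepFun_pi (μ := fun _ : Fin d => gaussianReal 0 1) (X := fun _ => id)
        (fun i => aemeasurable_id)
  have hgx' : HasGaussianLaw (fun q : (Fin d → ℝ) × ℝ => q.1) P := by
    refine ⟨?_⟩
    have := hgx.isGaussian_map
    rw [Measure.map_id'] at this
    rw [mfst.map_eq]; exact this
  have hgg : HasGaussianLaw (fun q : (Fin d → ℝ) × ℝ => q.2) P := by
    refine ⟨?_⟩
    rw [msnd.map_eq]; infer_instance
  have hind : IndepFun (fun q : (Fin d → ℝ) × ℝ => q.1) (fun q => q.2) P :=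
    indepFun_prod (X := fun x : Fin d → ℝ => x) (Y := fun y : ℝ => y) measurable_id measurable_id
  have hj : HasGaussianLaw (fun q : (Fin d → ℝ) × ℝ => (q.1, q.2)) P := hind.hasGaussianLaw hgx' hgg
  let LS : (Fin d → ℝ) → ((Fin d → ℝ) × ℝ →L[ℝ] ℝ) := fun c =>
    (∑ i, c i • ContinuousLinearMap.proj (R := ℝ) (φ := fun _ : Fin d => ℝ) i).comp
      (ContinuousLinearMap.fst ℝ (Fin d → ℝ) ℝ)
  have hG : HasGaussianLaw (fun q : (Fin d → ℝ) × ℝ =>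
      (∑ i, a i * q.1 i, (∑ i, b i * q.1 i) + q.2)) P := by
    have := hj.map_fun ((LS a).prod (LS b + ContinuousLinearMap.snd ℝ (Fin d → ℝ) ℝ))
    simpa [LS, sum_apply] using this
  -- moments
  have XL : ∀ i, MemLp (fun q : (Fin d → ℝ) × ℝ => q.1 i) 2 P := fun i =>
    (memLp_id_gaussianReal' 2 (by simp)).comp_measurePreserving (mX i)
  have hGL : MemLp (fun q : (Fin d → ℝ) × ℝ => q.2) 2 P :=
    (memLp_id_gaussianReal' 2 (by simp)).comp_measurePreserving msnd
  have X0 : ∀ i, ∫ q, q.1 i ∂P = 0 := fun i => by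
    have := integral_map (mX i).measurable.aemeasurable
      (f := fun y : ℝ => y) (μ := P) (by fun_prop)
    rw [← this, (mX i).map_eq, integral_id_gaussianReal]
  have G0 : ∫ q, q.2 ∂P = 0 := by
    have := integral_map msnd.measurable.aemeasurable
      (f := fun y : ℝ => y) (μ := P) (by fun_prop)
    rw [← this, msnd.map_eq, integral_id_gaussianReal]
  have S0 : ∀ c : Fin d → ℝ, ∫ q, ∑ i, c i * q.1 i ∂P = 0 := fun c => by
    rw [integral_finsetSum _ fun i _ => ((XL i).integrable one_le_two).const_mul _]
    simp [integral_const_mul, X0]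
  have SL : ∀ c : Fin d → ℝ, MemLp (fun q : (Fin d → ℝ) × ℝ => ∑ i, c i * q.1 i) 2 P := fun c =>
    memLp_finsetSum _ fun i _ => (XL i).const_mul _
  have XX : ∀ i j, cov[fun q : (Fin d → ℝ) × ℝ => q.1 i, fun q => q.1 j; P] =
      if i = j then 1 else 0 := by
    intro i j
    split_ifs with hij
    · subst hij
      rw [covariance_self (mX i).measurable.aemeasurable]
      have := variance_map (μ := P) (X := fun y : ℝ => y) (by fun_prop) (mX i).measurable.aemeasurable
      rw [(mX i).map_eq, variance_fun_id_gaussianReal] at this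
      exact this.symm
    · refine IndepFun.covariance_eq_zero ?_ (XL i) (XL j)
      have h1 : iIndepFun (fun i (x : Fin d → ℝ) => x i) (stdGaussian d) :=
        iIndepFun_pi (μ := fun _ : Fin d => gaussianReal 0 1) (X := fun _ => id)
          (fun i => aemeasurable_id)
      have h2 := h1.indepFun hij
      rw [← mfst.map_eq] at h2
      rw [indepFun_iff_map_prod_eq_prod_map_map (measurable_pi_apply i).aemeasurable
        (measurable_pi_apply j).aemeasurable] at h2
      rw [indepFun_iff_map_prod_eq_prod_map_map (by fun_prop) (by fun_prop)]
      rw [Measure.map_map (by fun_prop) (by fun_prop), Measure.map_map (by fun_prop) (by fun_prop),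
        Measure.map_map (by fun_prop) (by fun_prop)] at h2
      exact h2
  have SS : ∀ c e : Fin d → ℝ, cov[fun q : (Fin d → ℝ) × ℝ => ∑ i, c i * q.1 i,
      fun q => ∑ i, e i * q.1 i; P] = ∑ i, c i * e i := by
    intro c e
    rw [covariance_fun_sum_fun_sum (fun i => (XL i).const_mul _) (fun i => (XL i).const_mul _)]
    simp [covariance_const_mul_left, covariance_const_mul_right, XX, mul_comm]
  have SG : ∀ c : Fin d → ℝ, cov[fun q : (Fin d → ℝ) × ℝ => ∑ i, c i * q.1 i,
      fun q => q.2; P] = 0 := by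
    intro c
    refine IndepFun.covariance_eq_zero ?_ (SL c) hGL
    exact hind.comp (φ := fun x : Fin d → ℝ => ∑ i, c i * x i) (ψ := fun y : ℝ => y)
      (by fun_prop) measurable_id
  have GG : cov[fun q : (Fin d → ℝ) × ℝ => q.2, fun q => q.2; P] = ς ^ 2 := by
    rw [covariance_self msnd.measurable.aemeasurable]
    have := variance_map (μ := P) (X := fun y : ℝ => y) (by fun_prop) msnd.measurable.aemeasurable
    rw [msnd.map_eq, variance_fun_id_gaussianReal] at this
    exact this.symm
  have hAZ : cov[fun q : (Fin d → ℝ) × ℝ => ∑ i, a i * q.1 i,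
      fun q => (∑ i, b i * q.1 i) + q.2; P] = ∑ i, a i * b i := by
    have := covariance_add_right (SL a) (SL b) hGL
    rw [SS, SG, add_zero] at this
    exact this
  have hZZ : cov[fun q : (Fin d → ℝ) × ℝ => (∑ i, b i * q.1 i) + q.2,
      fun q => (∑ i, b i * q.1 i) + q.2; P] = ς ^ 2 + e2norm b ^ 2 := by
    have := covariance_add_right ((SL b).add hGL) (SL b) hGL
    rw [covariance_add_left (SL b) hGL (SL b), covariance_add_left (SL b) hGL hGL, SS, SG,
      covariance_comm (fun q : (Fin d → ℝ) × ℝ => q.2) (fun q => ∑ i, b i * q.1 i), SG, GG] at this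
    refine Eq.trans this ?_
    rw [hb2]
    simp only [pow_two]; ring
  have hvpos : 0 < ς ^ 2 + e2norm b ^ 2 := by positivity
  have main := aux_main (P := P) (fun q : (Fin d → ℝ) × ℝ => ∑ i, a i * q.1 i)
    (fun q => (∑ i, b i * q.1 i) + q.2) (by fun_prop) (by fun_prop) hG (S0 a)
    (by
      rw [integral_add ((SL b).integrable one_le_two) (hGL.integrable one_le_two), S0, G0, add_zero])
    _ _ hvpos hAZ hZZ ξ hξ0
  refine main.trans ?_
  gcongr
  have hcs : |∑ i, a i * b i| ≤ e2norm a * e2norm b := by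
    unfold e2norm
    rw [← Real.sqrt_mul (Finset.sum_nonneg fun i _ => sq_nonneg _)]
    exact Real.abs_le_sqrt (Finset.sum_mul_sq_le_sq_mul_sq _ _ _)
  calc _ ≤ e2norm a * e2norm b / (ς ^ 2 + e2norm b ^ 2) := by gcongr
    _ = _ := by field_simp
end
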